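/- arXiv:2303.10737 — 2 statements merged into one kernel-verified Lean document; each statement's English description precedes it below -/
import Mathlib

section
/- The pure round twin group Π_3 is isomorphic to the free group on 2 generators. -/
/-!
`QSet 2` is the torus `Circle × Circle` (the first two coordinates) with the point `(1, 1)` removed:
once the third coordinate is `1`, the only forbidden triple coincidence is `z₀ = z₁ = 1`. A once
punctured torus has free fundamental group of rank two.

The computation is a special case of van Kampen's theorem, for a *star cover*: a simply connected
open hub `U none` with simply connected open handles `U (some i)`, all containing the basepoint,
such that each handle meets the hub in exactly two disjoint path connected open pieces, the near one
(containing the basepoint) and the far one, and two different handles meet only inside the hub.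
In the punctured torus the hub is `(S¹ ∖ 1) × (S¹ ∖ 1)` and the two handles are
`(S¹ ∖ 1) × (S¹ ∖ -1)` and `(S¹ ∖ -1) × (S¹ ∖ 1)`; the near and far pieces are products of
`S¹ ∖ 1` with an open upper or lower half circle, so all these sets are products of open arcs.

For a star cover indexed by `ι`, let `ρ : FreeGroup ι → π₁(X, x₀)` send the generator `i` to the
loop that goes through the handle `i` to its far piece and comes back through the hub. Gluing
the products `U i × FreeGroup ι` along left multiplication by the generator `i` over the far piece
of the handle `i` gives a covering `E → X` with fibre `FreeGroup ι`.

* Define the developing map `D`, sending a point `(x, v)` of `E` to the homotopy class of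
  `ρ v` followed by a path from `x₀` to `x` inside a chart. It is independent of the chart
  (`D_eq`) and compatible with moving along paths of `E` (`D_trans`). Hence if the lift of a loop
  `q` starting at `(x₀, 1)` ends at `(x₀, w)`, then `q = ρ w`, and `ρ` is surjective.
* Any two points of the fibre over `x₀` are joined by a path in `E` (`joined_fiber`). A path from
  `(x₀, 1)` to `(x₀, v)` projects to `ρ v` by the previous item; if `ρ v = 1`, then uniqueness of
  homotopy lifting forces its end point to be `(x₀, 1)`, so `v = 1`, and `ρ` is injective.
-/

open scoped Real

noncomputable section

/-- The configuration space `Q_{n+1}` of `n+1` ordered points on the circle,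
no three of which coincide, with the last point fixed at `1`. -/
def QSet (n : ℕ) : Set (Fin (n + 1) → Circle) :=
  {z | z (Fin.last n) = 1 ∧
    ∀ i j k : Fin (n + 1), i ≠ j → i ≠ k → j ≠ k → ¬(z i = z j ∧ z i = z k)}

/-- The basepoint of `Q_{n+1}`: the `j`-th coordinate is `exp (2 π i j / (n+1))` (`1`-based). -/
def q0 (n : ℕ) : Fin (n + 1) → Circle :=
  fun j => Circle.exp (2 * π * (j.val + 1) / (n + 1))

theorem q0_injective (n : ℕ) : Function.Injective (q0 n) := by
  intro i j h
  simp only [q0] at h; rw [Circle.exp_eq_exp] at h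
  obtain ⟨m, hm⟩ := h
  have hn : (0:ℝ) < (n:ℝ) + 1 := by positivity
  have hpi : (0:ℝ) < π := Real.pi_pos
  have h2 : ((i.val : ℝ) + 1) = ((j.val : ℝ) + 1) + m * ((n:ℝ) + 1) := by
    field_simp at hm
    nlinarith [hm]
  have h3 : ((i.val : ℤ) + 1) = ((j.val : ℤ) + 1) + m * ((n:ℤ) + 1) := by
    exact_mod_cast h2
  have hi := i.isLt
  have hj := j.isLt
  have hb : m * ((n:ℤ) + 1) = (i.val : ℤ) - (j.val : ℤ) := by linarith [h3]
  have hi' : (i.val : ℤ) ≤ n := by exact_mod_cast Nat.lt_succ_iff.mp hi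
  have hj' : (j.val : ℤ) ≤ n := by exact_mod_cast Nat.lt_succ_iff.mp hj
  have hi0 : (0:ℤ) ≤ i.val := Int.natCast_nonneg _
  have hj0 : (0:ℤ) ≤ j.val := Int.natCast_nonneg _
  have hm0 : m = 0 := by
    rcases lt_trichotomy m 0 with hm' | hm' | hm'
    · have h1 : m ≤ -1 := by omega
      nlinarith
    · exact hm'
    · have h1 : 1 ≤ m := hm'
      nlinarith
  subst hm0
  simp only [zero_mul] at hb
  have : (i.val : ℤ) = j.val := by omega
  exact Fin.ext (by exact_mod_cast this)

theorem q0_mem (n : ℕ) : q0 n ∈ QSet n := by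
  constructor
  · show Circle.exp _ = 1
    have : 2 * π * ((Fin.last n).val + 1) / (n + 1) = 2 * π := by
      simp [Fin.last]
      field_simp
    rw [this, Circle.exp_two_pi]
  · intro i j k hij _ _ h
    exact hij (q0_injective n h.1)

/-- The basepoint as an element of `Q_{n+1}`. -/
def Qbase (n : ℕ) : QSet n := ⟨q0 n, q0_mem n⟩


open Set Topology
open scoped unitInterval

/-! ### The fundamental group of a space with a star cover -/

/-- A star cover of a pointed space: an open cover by simply connected sets containing the
basepoint, with a hub `U none` and handles `U (some i)`, such that every handle meets the hub in the
disjoint union of two path connected open sets `near i ∋ x₀` and `far i`, and distinct members of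
the cover meet only inside the hub. -/
structure StarCover {X : Type*} [TopologicalSpace X] (x₀ : X) (ι : Type*) where
  U : Option ι → Set X
  near : ι → Set X
  far : ι → Set X
  isOpen_U : ∀ i, IsOpen (U i)
  isOpen_near : ∀ i, IsOpen (near i)
  isOpen_far : ∀ i, IsOpen (far i)
  cover : ∀ x, ∃ i, x ∈ U i
  simply : ∀ i, SimplyConnectedSpace (U i)
  near_conn : ∀ i, IsPathConnected (near i)
  far_conn : ∀ i, IsPathConnected (far i)
  base_mem : ∀ i, x₀ ∈ U i
  base_near : ∀ i, x₀ ∈ near i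
  inter_hub : ∀ i, U (some i) ∩ U none = near i ∪ far i
  disj : ∀ i, Disjoint (near i) (far i)
  inter_sub : ∀ i j, i ≠ j → U i ∩ U j ⊆ U none

/-- The free group is given the discrete topology, as the fibre of a covering. -/
instance instTopFreeGroup {ι : Type*} : TopologicalSpace (FreeGroup ι) := ⊥

instance instDiscFreeGroup {ι : Type*} : DiscreteTopology (FreeGroup ι) := ⟨rfl⟩

namespace StarCover

variable {X : Type*} [TopologicalSpace X] {x₀ : X} {ι : Type*} (C : StarCover x₀ ι)

lemma mem_U_of_far {i : ι} {x : X} (hx : x ∈ C.far i) : x ∈ C.U (some i) ∩ C.U none := by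
  rw [C.inter_hub]; exact Or.inr hx

lemma mem_U_of_near {i : ι} {x : X} (hx : x ∈ C.near i) : x ∈ C.U (some i) ∩ C.U none := by
  rw [C.inter_hub]; exact Or.inl hx

lemma joinedIn_U {i : Option ι} {x y : X} (hx : x ∈ C.U i) (hy : y ∈ C.U i) :
    JoinedIn (C.U i) x y := by
  have := C.simply i
  exact (isPathConnected_iff_pathConnectedSpace.2 inferInstance).joinedIn x hx y hy

/-- Two paths lying in the same simply connected member of the cover are homotopic in `X`. -/
lemma mk_eq_mk {i : Option ι} {x y : X} (γ γ' : Path x y) (h : ∀ t, γ t ∈ C.U i)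
    (h' : ∀ t, γ' t ∈ C.U i) :
    Path.Homotopic.Quotient.mk γ = Path.Homotopic.Quotient.mk γ' := by
  have := C.simply i
  have hx : x ∈ C.U i := by simpa using h 0
  have hy : y ∈ C.U i := by simpa using h 1
  let δ : Path (⟨x, hx⟩ : C.U i) ⟨y, hy⟩ :=
    ⟨⟨fun t => ⟨γ t, h t⟩, by fun_prop⟩, by simp, by simp⟩
  let δ' : Path (⟨x, hx⟩ : C.U i) ⟨y, hy⟩ :=
    ⟨⟨fun t => ⟨γ' t, h' t⟩, by fun_prop⟩, by simp, by simp⟩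
  exact Path.Homotopic.Quotient.eq.2
    ((SimplyConnectedSpace.paths_homotopic δ δ').map ⟨Subtype.val, continuous_subtype_val⟩)

/-- The unique homotopy class of paths from `x₀` to `x` that lie inside `U i`. -/
def c (i : Option ι) (x : X) (hx : x ∈ C.U i) : Path.Homotopic.Quotient x₀ x :=
  .mk (C.joinedIn_U (C.base_mem i) hx).somePath

lemma c_trans {i : Option ι} {x y : X} (γ : Path x y) (h : ∀ t, γ t ∈ C.U i)
    (hx : x ∈ C.U i) (hy : y ∈ C.U i) : (C.c i x hx).trans (.mk γ) = C.c i y hy := by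
  unfold c
  rw [← Path.Homotopic.Quotient.mk_trans]
  refine C.mk_eq_mk _ _ (i := i) (fun t => ?_) (JoinedIn.somePath_mem _)
  have : (((C.joinedIn_U (C.base_mem i) hx).somePath).trans γ) t ∈
      range (((C.joinedIn_U (C.base_mem i) hx).somePath).trans γ) := mem_range_self t
  rw [Path.trans_range] at this
  rcases this with ⟨s, hs⟩ | ⟨s, hs⟩
  · rw [← hs]; exact JoinedIn.somePath_mem _ _
  · rw [← hs]; exact h s

lemma c_base (i : Option ι) : C.c i x₀ (C.base_mem i) = .refl x₀ :=
  C.mk_eq_mk (i := i) _ (Path.refl x₀) (JoinedIn.somePath_mem _) (fun _ => C.base_mem i)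

/-- The class of the loop that goes out inside `U i` and returns inside `U j` depends only on the
path component of `U i ∩ U j` in which the switch takes place. -/
lemma c_compare {i j : Option ι} {S : Set X} (hS : IsPathConnected S) (hi : S ⊆ C.U i)
    (hj : S ⊆ C.U j) {x y : X} (hx : x ∈ S) (hy : y ∈ S) :
    C.c i y (hi hy) = (((C.c i x (hi hx)).trans (C.c j x (hj hx)).symm)).trans
      (C.c j y (hj hy)) := by
  obtain ⟨γ, hγ⟩ := hS.joinedIn x hx y hy
  rw [← C.c_trans γ (fun t => hi (hγ t)) (hi hx), ← C.c_trans γ (fun t => hj (hγ t)) (hj hx),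
    ← Path.Homotopic.Quotient.trans_assoc,
    Path.Homotopic.Quotient.trans_assoc (C.c i x (hi hx))]
  simp

/-- The loop attached to a handle: out through `U (some i)` to a point of its far piece, and back
through the hub. -/
def gen (i : ι) : FundamentalGroup X x₀ :=
  (C.c (some i) _ (C.mem_U_of_far (C.far_conn i).nonempty.some_mem).1).trans
    (C.c none _ (C.mem_U_of_far (C.far_conn i).nonempty.some_mem).2).symm

/-- The homomorphism `FreeGroup ι → π₁(X, x₀)` sending each generator to the loop of its handle. -/
def ρ : FreeGroup ι →* FundamentalGroup X x₀ := FreeGroup.lift C.gen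

/-- The homomorphism `ρ`, with values regarded as homotopy classes of paths so that they can be
concatenated with paths that are not loops. -/
def path (v : FreeGroup ι) : Path.Homotopic.Quotient x₀ x₀ := C.ρ v

/-- Multiplication in `FundamentalGroup` is composition of automorphisms, hence concatenation in
the opposite order. -/
lemma path_mul (v w : FreeGroup ι) : C.path (v * w) = (C.path w).trans (C.path v) :=
  C.ρ.map_mul v w

lemma path_one : C.path 1 = .refl x₀ := C.ρ.map_one

open Classical in
/-- The transition element from the chart `U i` to the hub: trivial on the hub and near the
basepoint, and the generator `i` away from the near piece. Only its values on `U i ∩ U none`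
matter. -/
def h : Option ι → X → FreeGroup ι
  | none, _ => 1
  | some i, x => if x ∈ C.near i then 1 else .of i

lemma h_base (i : Option ι) : C.h i x₀ = 1 := by
  cases i <;> simp [h, C.base_near]

lemma h_far {i : ι} {x : X} (hx : x ∈ C.far i) : C.h (some i) x = .of i := by
  have : x ∉ C.near i := fun hn => (C.disj i).le_bot ⟨hn, hx⟩
  simp [h, this]

/-- Inside the hub, the paths from `x₀` through `U i` and through the hub differ by the loop
labelled by the transition element `h i x`. -/
lemma c_hub (i : Option ι) (x : X) (hx : x ∈ C.U i) (h0 : x ∈ C.U none) :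
    C.c i x hx = (C.path (C.h i x)).trans (C.c none x h0) := by
  cases i with
  | none => simp [h, path_one]
  | some i =>
    have hm : x ∈ C.near i ∪ C.far i := by rw [← C.inter_hub]; exact ⟨hx, h0⟩
    rcases hm with hm | hm
    · have := C.c_compare (C.near_conn i) (i := some i) (j := none)
        (fun _ h => (C.mem_U_of_near h).1) (fun _ h => (C.mem_U_of_near h).2)
        (C.base_near i) hm
      rw [this, c_base, c_base]
      simp [h, hm, path_one]
    · rw [C.h_far hm, C.c_compare (C.far_conn i) (i := some i) (j := none)
        (fun _ h => (C.mem_U_of_far h).1) (fun _ h => (C.mem_U_of_far h).2)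
        (C.far_conn i).nonempty.some_mem hm]
      simp [path, ρ, gen]

lemma continuousOn_h (i : Option ι) : ContinuousOn (C.h i) (C.U i ∩ C.U none) := by
  cases i with
  | none => exact continuousOn_const
  | some i =>
    rw [C.inter_hub]
    refine ContinuousOn.union_of_isOpen ?_ ?_ (C.isOpen_near i) (C.isOpen_far i)
    · exact (continuousOn_const (c := 1)).congr fun x hx => by simp [h, hx]
    · exact (continuousOn_const (c := .of i)).congr fun x hx => C.h_far hx

/-- The covering of `X` with fibre `FreeGroup ι` obtained by gluing the products
`U i × FreeGroup ι` along left multiplication by `(h j x)⁻¹ * h i x`. This is a cocycle by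
construction, and it is locally constant since distinct charts meet only inside the hub. -/
def core : FiberBundleCore (Option ι) X (FreeGroup ι) where
  baseSet := C.U
  isOpen_baseSet := C.isOpen_U
  indexAt x := (C.cover x).choose
  mem_baseSet_at x := (C.cover x).choose_spec
  coordChange i j x v := (C.h j x)⁻¹ * (C.h i x * v)
  coordChange_self i x _ v := by simp
  continuousOn_coordChange i j := by
    by_cases hij : i = j
    · subst hij
      simpa using continuousOn_snd
    · have h1 : C.U i ∩ C.U j ⊆ C.U i ∩ C.U none := fun x hx => ⟨hx.1, C.inter_sub i j hij hx⟩
      have h2 : C.U i ∩ C.U j ⊆ C.U j ∩ C.U none := fun x hx => ⟨hx.2, C.inter_sub i j hij hx⟩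
      have hi := ((C.continuousOn_h i).mono h1).comp (g := C.h i) (f := Prod.fst)
        (s := (C.U i ∩ C.U j) ×ˢ (univ : Set (FreeGroup ι))) continuousOn_fst
        (fun p hp => hp.1)
      have hj := ((C.continuousOn_h j).mono h2).comp (g := C.h j) (f := Prod.fst)
        (s := (C.U i ∩ C.U j) ×ˢ (univ : Set (FreeGroup ι))) continuousOn_fst
        (fun p hp => hp.1)
      have hF : Continuous (fun q : FreeGroup ι × FreeGroup ι × FreeGroup ι =>
          (q.1)⁻¹ * (q.2.1 * q.2.2)) := continuous_of_discreteTopology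
      exact hF.comp_continuousOn (hj.prodMk (hi.prodMk continuousOn_snd))
  coordChange_comp i j k x _ v := by group

/-- The total space of the covering `core`. -/
abbrev E := C.core.TotalSpace

lemma isCoveringMap : IsCoveringMap (C.core.proj) :=
  FiberBundle.isCoveringMap (F := FreeGroup ι) (E := C.core.Fiber)

/-- The point of `E` over `x` whose coordinate in the preferred chart `core.indexAt x` at `x`
is `v`. -/
def mkE (x : X) (v : FreeGroup ι) : C.E := ⟨x, v⟩

/-- The coordinate of a point of `E` in the preferred chart at its projection. -/
def fib (e : C.E) : FreeGroup ι := e.2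

lemma fib_mkE (x : X) (v : FreeGroup ι) : C.fib (C.mkE x v) = v := rfl

/-- The point of `E` over `x` whose coordinate in the chart `i` is `v`. -/
def s (i : Option ι) (x : X) (v : FreeGroup ι) : C.E :=
  C.mkE x (C.core.coordChange i (C.core.indexAt x) x v)

/-- The coordinate of a point of `E` in the chart `i`. -/
def coord (i : Option ι) (e : C.E) : FreeGroup ι :=
  C.core.coordChange (C.core.indexAt e.1) i e.1 (C.fib e)

lemma s_base (i : Option ι) (v : FreeGroup ι) : C.s i x₀ v = C.mkE x₀ v := by
  change C.mkE x₀ ((C.h (C.core.indexAt x₀) x₀)⁻¹ * (C.h i x₀ * v)) = _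
  rw [h_base, h_base, inv_one, one_mul, one_mul]

lemma s_change (i j : Option ι) (x : X) (v : FreeGroup ι) :
    C.s i x v = C.s j x ((C.h j x)⁻¹ * (C.h i x * v)) := by
  change C.mkE x ((C.h (C.core.indexAt x) x)⁻¹ * (C.h i x * v)) =
    C.mkE x ((C.h (C.core.indexAt x) x)⁻¹ * (C.h j x * ((C.h j x)⁻¹ * (C.h i x * v))))
  rw [mul_inv_cancel_left]

lemma joined_s (i : Option ι) {x y : X} (hx : x ∈ C.U i) (hy : y ∈ C.U i) (v : FreeGroup ι) :
    Joined (C.s i x v) (C.s i y v) := by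
  obtain ⟨γ, hγ⟩ := C.joinedIn_U hx hy
  have hc : Continuous fun t => C.s i (γ t) v := by
    have := (C.core.localTriv i).toOpenPartialHomeomorph.continuousOn_symm
    exact this.comp_continuous (γ.continuous.prodMk continuous_const)
      (fun t => ⟨hγ t, trivial⟩)
  exact ⟨⟨⟨fun t => C.s i (γ t) v, hc⟩, by simp, by simp⟩⟩

/-- Any two points of the fibre over `x₀` lie in one path component of `E`: going out along a
handle and back through the hub multiplies the coordinate by a generator. -/
lemma joined_fiber (w v : FreeGroup ι) :
    Joined (C.mkE x₀ v) (C.mkE x₀ (w * v)) := by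
  have key : ∀ (i : ι) (v : FreeGroup ι), Joined (C.mkE x₀ v) (C.mkE x₀ (.of i * v)) := by
    intro i v
    obtain ⟨y, hy⟩ := (C.far_conn i).nonempty
    have h1 := C.joined_s (some i) (C.base_mem _) (C.mem_U_of_far hy).1 v
    have h2 := C.joined_s none (C.mem_U_of_far hy).2 (C.base_mem _) (.of i * v)
    rw [C.s_change (some i) none y, C.h_far hy, s_base] at h1
    rw [s_base] at h2
    simp only [h, inv_one, one_mul] at h1
    exact h1.trans h2
  induction w using FreeGroup.induction_on generalizing v with
  | C1 => rw [one_mul]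
  | of i => exact key i v
  | inv_of i _ =>
    have := (key i ((FreeGroup.of i)⁻¹ * v)).symm
    rwa [mul_inv_cancel_left] at this
  | mul x y hx hy => rw [mul_assoc]; exact (hy v).trans (hx (y * v))

/-- The developing map: a point of `E` over `x` with coordinate `v` in the preferred chart at `x`
is sent to the loop `ρ v` followed by the path from `x₀` to `x` inside that chart. -/
def D (e : C.E) : Path.Homotopic.Quotient x₀ e.1 :=
  (C.path (C.fib e)).trans (C.c _ e.1 (C.core.mem_baseSet_at e.1))

/-- The developing map is given by the same formula in every chart. -/
lemma D_eq (e : C.E) (i : Option ι) (he : e.1 ∈ C.U i) :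
    C.D e = (C.path (C.coord i e)).trans (C.c i e.1 he) := by
  have hx := C.core.mem_baseSet_at e.1
  by_cases hij : C.core.indexAt e.1 = i
  · subst hij
    simp only [D, coord, C.core.coordChange_self _ _ hx]
  · have h0 := C.inter_sub _ _ hij ⟨hx, he⟩
    simp only [D, coord]
    rw [C.c_hub _ e.1 hx h0, C.c_hub i e.1 he h0, ← Path.Homotopic.Quotient.trans_assoc,
      ← Path.Homotopic.Quotient.trans_assoc, ← path_mul, ← path_mul]
    simp [core]

lemma D_base (v : FreeGroup ι) : C.D (C.mkE x₀ v) = C.path v := by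
  simp only [D, fib_mkE]
  exact (congrArg _ (C.c_base _)).trans (Path.Homotopic.Quotient.trans_refl _)

/-- The developing map is equivariant for paths in `E`: moving along a path appends its projection.
Along a short piece of path, inside one chart, the coordinate is constant and the path is absorbed
into the path of the chart; connectedness of the interval does the rest. -/
lemma D_trans {e e' : C.E} (Γ : Path e e') :
    (C.D e).trans (.mk (Γ.map C.isCoveringMap.continuous)) = C.D e' := by
  set γ := Γ.map C.isCoveringMap.continuous with hγ
  -- The claim for a piece of the path inside one chart, on which the coordinate is unchanged.
  have step : ∀ (i : Option ι) (t s : I), (∀ r ∈ uIcc t s, γ r ∈ C.U i) →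
      C.coord i (Γ s) = C.coord i (Γ t) →
      (C.D (Γ t)).trans (.mk (γ.subpath t s)) = C.D (Γ s) := by
    intro i t s hU hc
    have hr : ∀ r, γ.subpath t s r ∈ C.U i := by
      intro r
      have : γ.subpath t s r ∈ range (γ.subpath t s) := mem_range_self r
      rw [Path.range_subpath] at this
      obtain ⟨r', hr', h⟩ := this
      rw [← h]; exact hU r' hr'
    rw [C.D_eq (Γ t) i (hU t left_mem_uIcc), C.D_eq (Γ s) i (hU s right_mem_uIcc), hc,
      Path.Homotopic.Quotient.trans_assoc]
    congr 1
    exact C.c_trans _ hr _ _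
  have htrans : ∀ (D' : ∀ t, Path.Homotopic.Quotient x₀ (γ t)) (a b d : I),
      (D' a).trans (.mk (γ.subpath a b)) = D' b → (D' b).trans (.mk (γ.subpath b d)) = D' d →
      (D' a).trans (.mk (γ.subpath a d)) = D' d := by
    intro D' a b d hab hbd
    rw [← hbd, ← hab, Path.Homotopic.Quotient.trans_assoc, ← Path.Homotopic.Quotient.mk_trans]
    congr 1
    exact Path.Homotopic.Quotient.eq.2 ⟨(Path.Homotopy.subpathTransSubpath γ a b d).symm⟩
  -- The relation between `t` and `s` stated here holds for `s` near `t`, and it is transitive.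
  have all : ∀ t s : I, (C.D (Γ t)).trans (.mk (γ.subpath t s)) = C.D (Γ s) := by
    refine PreconnectedSpace.induction₂' _ (fun t => ?_) ⟨fun a b d hab hbd => ?_⟩
    · obtain ⟨i, hi⟩ := C.cover (Γ t).1
      have hT : ∀ᶠ r in 𝓝 t, γ r ∈ C.U i :=
        γ.continuous.continuousAt.eventually ((C.isOpen_U i).mem_nhds hi)
      have hcoord : ContinuousAt (fun r => C.coord i (Γ r)) t := by
        have h1 : ContinuousAt (C.core.localTriv i) (Γ t) :=
          (C.core.localTriv i).continuousOn_toFun.continuousAt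
            ((C.core.localTriv i).open_source.mem_nhds hi)
        exact continuousAt_snd.comp (h1.comp Γ.continuous.continuousAt)
      have hev : ∀ᶠ r in 𝓝 t, C.coord i (Γ r) = C.coord i (Γ t) :=
        hcoord.eventually (IsOpen.mem_nhds (isOpen_discrete {C.coord i (Γ t)}) rfl)
      have hI : ∀ᶠ s in 𝓝 t, ∀ r ∈ uIcc t s, γ r ∈ C.U i := by
        have := (tendsto_const_nhds (x := t)).uIcc (Filter.tendsto_id (x := 𝓝 t))
        exact Filter.eventually_smallSets_forall.2 hT |> this.eventually
      filter_upwards [hev, hI] with s hs hs'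
      exact ⟨step i t s hs' hs, step i s t (by rwa [uIcc_comm]) hs.symm⟩
    · exact htrans (fun t => C.D (Γ t)) a b d hab hbd
  have h01 := all 0 1
  -- The end points of `Γ` are made definitional, so that `γ.subpath 0 1` has the type of `γ`.
  obtain ⟨Γ, h0, h1⟩ := Γ
  subst h0 h1
  rw [Path.subpath_zero_one] at h01
  exact h01

/-- Path lifting for `E`, stated for homotopy
classes of paths. -/
lemma exists_lift {y : X} (q : Path.Homotopic.Quotient x₀ y) (v : FreeGroup ι) :
    ∃ (w : FreeGroup ι) (Γ : Path (C.mkE x₀ v) (C.mkE y w)),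
      .mk (Γ.map C.isCoveringMap.continuous) = q := by
  induction q using Path.Homotopic.Quotient.ind with | mk γ => ?_
  obtain ⟨Γ, hΓ, h0⟩ := C.isCoveringMap.exists_path_lifts γ (C.mkE x₀ v) γ.source
  obtain ⟨z, hz⟩ : ∃ z, z = Γ 1 := ⟨_, rfl⟩
  have hy : z.1 = y := by
    rw [hz]; exact (congrFun hΓ 1).trans γ.target
  obtain ⟨y', w⟩ := z
  simp only at hy
  subst hy
  refine ⟨w, ⟨Γ, h0, hz.symm⟩, ?_⟩
  congr 1
  ext t
  exact congrFun hΓ t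

/-- A loop lifting to a path from `(x₀, 1)` to `(x₀, w)` is `ρ w`: compare the developing map at the
two ends. -/
lemma eq_path {q : Path.Homotopic.Quotient x₀ x₀} {w : FreeGroup ι}
    (Γ : Path (C.mkE x₀ 1) (C.mkE x₀ w))
    (hΓ : .mk (Γ.map C.isCoveringMap.continuous) = q) : q = C.path w := by
  have h1 : (C.D (C.mkE x₀ 1)).trans (.mk (Γ.map C.isCoveringMap.continuous)) =
      (C.path 1).trans q := congrArg₂ Path.Homotopic.Quotient.trans (C.D_base 1) hΓ
  have h2 := h1.symm.trans ((C.D_trans Γ).trans (C.D_base w))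
  rwa [path_one, Path.Homotopic.Quotient.refl_trans] at h2

lemma ρ_surjective : Function.Surjective C.ρ := by
  intro q
  obtain ⟨w, Γ, hΓ⟩ := C.exists_lift q 1
  exact ⟨w, (C.eq_path Γ hΓ).symm⟩

/-- A path in `E` from `(x₀, 1)` to `(x₀, v)` projects to `ρ v`. If this loop is trivial, then its
monodromy, which carries `1` to `v`, is the identity. -/
lemma ρ_injective : Function.Injective C.ρ := by
  rw [injective_iff_map_eq_one]
  intro v hv
  have hj := C.joined_fiber v 1
  rw [mul_one] at hj
  obtain ⟨Γ⟩ := hj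
  have h1 := C.eq_path Γ rfl
  have h2 := C.isCoveringMap.monodromy_map (.mk Γ)
  have h3 : Path.Homotopic.Quotient.map (.mk Γ) ⟨C.core.proj, C.isCoveringMap.continuous⟩ =
      .refl x₀ := h1.trans hv
  have h4 := congrFun (C.isCoveringMap.monodromy_refl (x := x₀)) ⟨C.mkE x₀ 1, rfl⟩
  rw [h3] at h2
  exact congrArg (fun e => C.fib e.1) (h2.symm.trans h4)

/-- The fundamental group of a space with a star cover is free on the set of handles. -/
def mulEquiv : FundamentalGroup X x₀ ≃* FreeGroup ι :=
  (MulEquiv.ofBijective C.ρ ⟨C.ρ_injective, C.ρ_surjective⟩).symm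

end StarCover


/-! ### The punctured torus -/

namespace PuncturedTorus

/-- A set of points of the circle described by requiring the argument, measured from `u⁻¹`, to lie
in an interval avoiding `π` is contractible: the argument maps it homeomorphically to that
interval. -/
lemma contractible_arc (u : Circle) {J : Set ℝ} (hJ : Convex ℝ J) (hne : J.Nonempty)
    (hsub : J ⊆ Ioo (-π) π) {S : Set Circle} (hS : ∀ z, z ∈ S ↔ (u * z : Circle).1.arg ∈ J) :
    ContractibleSpace S := by
  obtain rfl : S = {z : Circle | (u * z : Circle).1.arg ∈ J} := Set.ext hS
  have := hJ.contractibleSpace hne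
  let e : {z : Circle | (u * z : Circle).1.arg ∈ J} ≃ₜ J :=
    { toFun := fun z => ⟨_, z.2⟩
      invFun := fun θ => ⟨u⁻¹ * Circle.exp θ, by
        have h := hsub θ.2
        change (u * (u⁻¹ * Circle.exp θ) : Circle).1.arg ∈ J
        rw [mul_inv_cancel_left]
        rw [Circle.arg_exp h.1 h.2.le]
        exact θ.2⟩
      left_inv := fun z => Subtype.ext (by
        change u⁻¹ * Circle.exp (u * z.1 : Circle).1.arg = z.1
        rw [Circle.exp_arg, inv_mul_cancel_left])
      right_inv := fun θ => Subtype.ext (by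
        have h := hsub θ.2
        simp only [mul_inv_cancel_left]
        exact Circle.arg_exp h.1 h.2.le)
      continuous_toFun := by
        refine Continuous.subtype_mk ?_ _
        refine continuous_iff_continuousAt.2 fun z => ?_
        have h : (u * z.1 : Circle).1.arg ∈ Ioo (-π) π := hsub z.2
        have h1 : (u * z.1 : Circle).1 ∈ Complex.slitPlane :=
          Complex.mem_slitPlane_iff_arg.2 ⟨h.2.ne, Circle.coe_ne_zero _⟩
        exact (Complex.continuousAt_arg h1).comp
          (f := fun z : {z : Circle | (u * z : Circle).1.arg ∈ J} => (u * z.1 : Circle).1)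
          (by fun_prop)
      continuous_invFun := by fun_prop }
  exact e.contractibleSpace

lemma arg_eq_pi_iff (z : Circle) : z.1.arg = π ↔ z = -1 := by
  rw [← Circle.arg_eq_arg]
  simp

lemma arg_lt_pi_iff (z : Circle) : z.1.arg ∈ Ioo (-π) π ↔ z ≠ -1 := by
  rw [Ne, ← arg_eq_pi_iff]
  exact ⟨fun h => h.2.ne, fun h => ⟨Complex.neg_pi_lt_arg _, (Complex.arg_le_pi _).lt_of_ne h⟩⟩

/-- The circle without `1`. -/
def ne₁ : Set Circle := {z | z ≠ 1}
/-- The circle without `-1`. -/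
def neNeg : Set Circle := {z | z ≠ -1}
/-- The open upper half circle. -/
def upper : Set Circle := {z | 0 < z.1.im}
/-- The open lower half circle. -/
def lower : Set Circle := {z | z.1.im < 0}

instance : ContractibleSpace ne₁ := by
  refine contractible_arc (-1) (convex_Ioo (-π) π) ⟨0, by simp [Real.pi_pos]⟩ subset_rfl fun z => ?_
  change z ≠ 1 ↔ (-1 * z : Circle).1.arg ∈ Ioo (-π) π
  rw [arg_lt_pi_iff]
  simp

instance : ContractibleSpace neNeg := by
  refine contractible_arc 1 (convex_Ioo (-π) π) ⟨0, by simp [Real.pi_pos]⟩ subset_rfl fun z => ?_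
  change z ≠ -1 ↔ (1 * z : Circle).1.arg ∈ Ioo (-π) π
  rw [arg_lt_pi_iff, one_mul]

instance : ContractibleSpace lower := by
  refine contractible_arc 1 (convex_Ioo (-π) 0) ⟨-1, by simp; linarith [Real.pi_gt_three]⟩
    (Ioo_subset_Ioo_right Real.pi_pos.le) fun z => ?_
  change z.1.im < 0 ↔ (1 * z : Circle).1.arg ∈ Ioo (-π) 0
  rw [one_mul, ← Complex.arg_neg_iff]
  exact ⟨fun h => ⟨Complex.neg_pi_lt_arg _, h⟩, fun h => h.2⟩

instance : ContractibleSpace upper := by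
  refine contractible_arc 1 (convex_Ioo 0 π) ⟨1, by simp; linarith [Real.pi_gt_three]⟩
    (Ioo_subset_Ioo_left (by linarith [Real.pi_pos])) fun z => ?_
  change 0 < z.1.im ↔ (1 * z : Circle).1.arg ∈ Ioo 0 π
  rw [one_mul]
  constructor
  · intro h
    refine ⟨?_, ?_⟩
    · refine (Complex.arg_nonneg_iff.2 h.le).lt_of_ne fun h0 => ?_
      exact h.ne' (Complex.arg_eq_zero_iff.1 h0.symm).2
    · refine (Complex.arg_le_pi _).lt_of_ne fun h0 => ?_
      rw [Complex.arg_eq_pi_iff] at h0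
      exact h.ne' h0.2
  · intro h
    refine (Complex.arg_nonneg_iff.1 h.1.le).lt_of_ne fun h0 => ?_
    have := Real.sin_pos_of_mem_Ioo h
    rw [Complex.sin_arg, ← h0] at this
    simp at this

lemma ne_iff (z : Circle) : (z ≠ 1 ∧ z ≠ -1) ↔ z ∈ upper ∨ z ∈ lower := by
  have : z.1.im = 0 ↔ z = 1 ∨ z = -1 := by
    constructor
    · intro h
      have h1 := Circle.normSq_coe z
      rw [Complex.normSq_apply, h] at h1
      rcases mul_self_eq_one_iff.1 (by simpa using h1) with h2 | h2
      · left; ext; apply Complex.ext <;> simp [h, h2]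
      · right; ext; apply Complex.ext <;> simp [h, h2]
    · rintro (rfl | rfl) <;> simp
  rw [← not_or, ← this]
  exact ne_iff_gt_or_lt

/-- The points of `QSet 2` whose first coordinate lies in `A` and whose second lies in `B`. -/
def rect (A B : Set Circle) : Set (QSet 2) := {z | z.1 0 ∈ A ∧ z.1 1 ∈ B}

lemma continuous_coord (i : Fin 3) : Continuous fun z : QSet 2 => z.1 i :=
  (continuous_apply i).comp continuous_subtype_val

lemma mem_QSet (a b : Circle) (h : a ≠ 1 ∨ b ≠ 1) : ![a, b, 1] ∈ QSet 2 := by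
  refine ⟨rfl, fun i j k hij hik hjk => ?_⟩
  fin_cases i <;> fin_cases j <;> fin_cases k <;> simp_all <;> grind

lemma ne_one (z : QSet 2) : z.1 0 ≠ 1 ∨ z.1 1 ≠ 1 := by
  by_contra! h
  have h2 : z.1 2 = 1 := z.2.1
  exact z.2.2 0 1 2 (by decide) (by decide) (by decide) ⟨h.1.trans h.2.symm, h.1.trans h2.symm⟩

/-- If `A × B` avoids `(1, 1)`, then `rect A B` is homeomorphic to `A × B`; the third coordinate
is constantly `1`. -/
def rectHomeo (A B : Set Circle) (h : ∀ a ∈ A, ∀ b ∈ B, a ≠ 1 ∨ b ≠ 1) : rect A B ≃ₜ A × B where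
  toFun z := (⟨z.1.1 0, z.2.1⟩, ⟨z.1.1 1, z.2.2⟩)
  invFun p := ⟨⟨![p.1, p.2, 1], mem_QSet _ _ (h _ p.1.2 _ p.2.2)⟩, p.1.2, p.2.2⟩
  left_inv z := by
    refine Subtype.ext (Subtype.ext (funext fun i => ?_))
    fin_cases i
    · rfl
    · rfl
    · exact z.1.2.1.symm
  right_inv p := rfl
  continuous_toFun :=
    (((continuous_coord 0).comp continuous_subtype_val).subtype_mk _).prodMk
      (((continuous_coord 1).comp continuous_subtype_val).subtype_mk _)
  continuous_invFun := by
    refine Continuous.subtype_mk (Continuous.subtype_mk (continuous_pi fun i => ?_) _) _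
    fin_cases i
    · exact continuous_subtype_val.comp continuous_fst
    · exact continuous_subtype_val.comp continuous_snd
    · exact continuous_const

lemma contractible_rect {A B : Set Circle} [ContractibleSpace A] [ContractibleSpace B]
    (h : ∀ a ∈ A, ∀ b ∈ B, a ≠ 1 ∨ b ≠ 1) : ContractibleSpace (rect A B) :=
  (rectHomeo A B h).contractibleSpace

lemma isPathConnected_rect {A B : Set Circle} [ContractibleSpace A] [ContractibleSpace B]
    (h : ∀ a ∈ A, ∀ b ∈ B, a ≠ 1 ∨ b ≠ 1) : IsPathConnected (rect A B) := by
  have := contractible_rect h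
  exact isPathConnected_iff_pathConnectedSpace.2 inferInstance

lemma isOpen_rect {A B : Set Circle} (hA : IsOpen A) (hB : IsOpen B) : IsOpen (rect A B) :=
  (hA.preimage (continuous_coord 0)).inter
    (hB.preimage (continuous_coord 1))

lemma isOpen_ne₁ : IsOpen ne₁ := isOpen_compl_singleton
lemma isOpen_neNeg : IsOpen neNeg := isOpen_compl_singleton
lemma isOpen_upper : IsOpen upper :=
  isOpen_lt continuous_const (Complex.continuous_im.comp continuous_subtype_val)
lemma isOpen_lower : IsOpen lower :=
  isOpen_lt (Complex.continuous_im.comp continuous_subtype_val) continuous_const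

/-- The first coordinate of the basepoint is `exp (2πi/3)`. -/
lemma base_zero : (Qbase 2).1 0 ∈ upper := by
  change 0 < (Circle.exp _ : ℂ).im
  rw [Circle.coe_exp, Complex.exp_ofReal_mul_I_im]
  apply Real.sin_pos_of_pos_of_lt_pi <;> norm_num <;> linarith [Real.pi_pos]

/-- The second coordinate of the basepoint is `exp (4πi/3)`. -/
lemma base_one : (Qbase 2).1 1 ∈ lower := by
  change (Circle.exp _ : ℂ).im < 0
  rw [Circle.coe_exp, Complex.exp_ofReal_mul_I_im, ← Real.sin_sub_two_pi]
  apply Real.sin_neg_of_neg_of_neg_pi_lt <;> norm_num <;> linarith [Real.pi_pos]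

lemma one_ne_neg_one : (1 : Circle) ≠ -1 := fun h => by
  have := congrArg (fun z : Circle => z.1.re) h
  norm_num at this

lemma disjoint_upper_lower : Disjoint upper lower :=
  Set.disjoint_left.2 fun z (h : 0 < z.1.im) (h' : z.1.im < 0) => lt_asymm h h'

lemma upper_ne {z : Circle} (h : z ∈ upper) : z ≠ 1 ∧ z ≠ -1 := (ne_iff z).2 (Or.inl h)
lemma lower_ne {z : Circle} (h : z ∈ lower) : z ≠ 1 ∧ z ≠ -1 := (ne_iff z).2 (Or.inr h)

/-- The star cover of the punctured torus by three rectangles. Since `z₀` lies above and `z₁` below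
the real axis at the basepoint, the near pieces are the ones with second coordinate in the lower,
respectively first coordinate in the upper, half circle. -/
def starCover : StarCover (Qbase 2) (Fin 2) where
  U
    | none => rect ne₁ ne₁
    | some 0 => rect ne₁ neNeg
    | some 1 => rect neNeg ne₁
  near := ![rect ne₁ lower, rect upper ne₁]
  far := ![rect ne₁ upper, rect lower ne₁]
  isOpen_U
    | none => isOpen_rect isOpen_ne₁ isOpen_ne₁
    | some 0 => isOpen_rect isOpen_ne₁ isOpen_neNeg
    | some 1 => isOpen_rect isOpen_neNeg isOpen_ne₁
  isOpen_near := Fin.forall_fin_two.2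
    ⟨isOpen_rect isOpen_ne₁ isOpen_lower, isOpen_rect isOpen_upper isOpen_ne₁⟩
  isOpen_far := Fin.forall_fin_two.2
    ⟨isOpen_rect isOpen_ne₁ isOpen_upper, isOpen_rect isOpen_lower isOpen_ne₁⟩
  cover z := by
    by_cases h0 : z.1 0 = 1
    · refine ⟨some 1, ?_, (ne_one z).resolve_left (not_not.2 h0)⟩
      change z.1 0 ≠ -1
      rw [h0]
      exact one_ne_neg_one
    · by_cases h1 : z.1 1 = 1
      · refine ⟨some 0, h0, ?_⟩
        change z.1 1 ≠ -1
        rw [h1]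
        exact one_ne_neg_one
      · exact ⟨none, h0, h1⟩
  simply
    | none => have := contractible_rect (A := ne₁) (B := ne₁) fun a ha _ _ => Or.inl ha
              inferInstance
    | some 0 => have := contractible_rect (A := ne₁) (B := neNeg) fun a ha _ _ => Or.inl ha
                inferInstance
    | some 1 => have := contractible_rect (A := neNeg) (B := ne₁) fun _ _ b hb => Or.inr hb
                inferInstance
  near_conn := Fin.forall_fin_two.2
    ⟨isPathConnected_rect fun a ha _ _ => Or.inl ha, isPathConnected_rect fun _ _ b hb => Or.inr hb⟩
  far_conn := Fin.forall_fin_two.2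
    ⟨isPathConnected_rect fun a ha _ _ => Or.inl ha, isPathConnected_rect fun _ _ b hb => Or.inr hb⟩
  base_mem
    | none => ⟨(upper_ne base_zero).1, (lower_ne base_one).1⟩
    | some 0 => ⟨(upper_ne base_zero).1, (lower_ne base_one).2⟩
    | some 1 => ⟨(upper_ne base_zero).2, (lower_ne base_one).1⟩
  base_near := Fin.forall_fin_two.2
    ⟨⟨(upper_ne base_zero).1, base_one⟩, ⟨base_zero, (lower_ne base_one).1⟩⟩
  inter_hub := Fin.forall_fin_two.2 ⟨by
    ext z
    have := ne_iff (z.1 1)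
    change ((z.1 0 ≠ 1 ∧ z.1 1 ≠ -1) ∧ (z.1 0 ≠ 1 ∧ z.1 1 ≠ 1)) ↔
      (z.1 0 ≠ 1 ∧ z.1 1 ∈ lower) ∨ (z.1 0 ≠ 1 ∧ z.1 1 ∈ upper)
    tauto, by
    ext z
    have := ne_iff (z.1 0)
    change ((z.1 0 ≠ -1 ∧ z.1 1 ≠ 1) ∧ (z.1 0 ≠ 1 ∧ z.1 1 ≠ 1)) ↔
      (z.1 0 ∈ upper ∧ z.1 1 ≠ 1) ∨ (z.1 0 ∈ lower ∧ z.1 1 ≠ 1)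
    tauto⟩
  disj := Fin.forall_fin_two.2
    ⟨Set.disjoint_left.2 fun _ h h' => Set.disjoint_left.1 disjoint_upper_lower h'.2 h.2,
      Set.disjoint_left.2 fun _ h h' => Set.disjoint_left.1 disjoint_upper_lower h.1 h'.1⟩
  inter_sub
    | none, _, _ => inter_subset_left
    | some _, none, _ => inter_subset_right
    | some 0, some 0, h => (h rfl).elim
    | some 1, some 1, h => (h rfl).elim
    | some 0, some 1, _ => fun _ hz => ⟨hz.1.1, hz.2.2⟩
    | some 1, some 0, _ => fun _ hz => ⟨hz.2.1, hz.1.2⟩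

end PuncturedTorus

/-- The pure round twin group `Π₃ = π₁(Q₃, q₀)` is isomorphic to the
free group on 2 generators. (Here `Q₃ = QSet 2`.) -/
theorem pure_round_twin_three_isomorphic_free_group_two :
    Nonempty (FundamentalGroup (QSet 2) (Qbase 2) ≃* FreeGroup (Fin 2)) := by
  exact ⟨PuncturedTorus.starCover.mulEquiv⟩
end
end

section
/- The pure round twin group Π_4 is isomorphic to the free group on 4 generators. -/
/-!
Write a point of `Q₄` as `(z₁, z₂, z₃, 1)`. The pair `(z₁, z₃)` may be anything but `(1, 1)`, and
for fixed `(z₁, z₃)` the point `z₂` may be anything unless two of the points `z₁, z₃, 1` coincide,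
in which case `z₂` must avoid the common value. The function
`|z₁ - z₃|² - 8 (z₁ - 1) (z₃ - 1)` has no zero on the torus minus `(1, 1)`, and its direction
`centre z₁ z₃` equals that common value whenever two of the points coincide. Hence dividing `z₂` by
`centre z₁ z₃` straightens the forbidden curves: `Q₄` is homeomorphic (`straighten`) to the set
`model` of all `(a, b, w)` in the torus with `(a, b) ≠ (1, 1)`, and with `w ≠ 1` whenever `a = 1`
or `b = 1` or `a = b`.

In `model`, the sets `a = 1`, `b = 1` and `w = 1` are disjoint closed walls. The first two are open
discs, and the third has two components, `arg a < arg b` and `arg b < arg a`, which are open discs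
as well. Cutting along the four walls leaves an open cube. So `π₁` is free on the four walls, a
loop being sent to the word that records its crossings.

The last step is `fundamentalGroup_of_walls`. The word of crossings is made precise as the holonomy
of a locally constant cocycle, that is, as the monodromy of a covering space with fibre the free
group (`exists_holonomy`). Its inverse sends a generator to a loop that crosses one wall once. That
the composite on `π₁` is the identity is checked on paths contained in a single set of the
cover, which is enough by `pathClass_induction`.
-/

open scoped Real

noncomputable section

section proof

open Set Topology unitInterval

/-! ### Holonomy of locally constant cocycles -/

/-- Path classes are generated under concatenation by the classes of paths that stay inside one
member of a given open cover. -/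
theorem pathClass_induction {X : Type*} [TopologicalSpace X] {ι : Type*} {V : ι → Set X}
    (hV : ∀ i, IsOpen (V i)) (hcov : ∀ x, ∃ i, x ∈ V i)
    (P : ∀ x y : X, Path.Homotopic.Quotient x y → Prop)
    (small : ∀ i x y (γ : Path x y), range γ ⊆ V i → P x y (.mk γ))
    (trans : ∀ x y z (p : Path.Homotopic.Quotient x y) (q : Path.Homotopic.Quotient y z),
      P x y p → P y z q → P x z (p.trans q))
    {x y : X} (q : Path.Homotopic.Quotient x y) : P x y q := by
  induction q using Path.Homotopic.Quotient.ind with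
  | _ γ =>
  obtain ⟨t, t0, tmono, ⟨n, tn⟩, ht⟩ :=
    exists_monotone_Icc_subset_open_cover_unitInterval (c := fun i => γ ⁻¹' V i)
      (fun i => (hV i).preimage γ.continuous)
      (fun s _ => by obtain ⟨i, hi⟩ := hcov (γ s); exact mem_iUnion.2 ⟨i, hi⟩)
  have key : ∀ n, P _ _ (.mk (γ.subpath (t 0) (t n))) := by
    intro n
    induction n with
    | zero =>
      obtain ⟨i, hi⟩ := ht 0
      refine small i _ _ _ ?_
      rw [Path.range_subpath_of_le _ _ _ le_rfl]
      rintro _ ⟨s, hs, rfl⟩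
      exact hi ⟨hs.1, hs.2.trans (tmono (Nat.zero_le _))⟩
    | succ n ih =>
      obtain ⟨i, hi⟩ := ht n
      have h2 : P _ _ (.mk (γ.subpath (t n) (t (n + 1)))) := by
        refine small i _ _ _ ?_
        rw [Path.range_subpath_of_le _ _ _ (tmono n.le_succ)]
        rintro _ ⟨s, hs, rfl⟩
        exact hi hs
      have h3 := trans _ _ _ _ _ ih h2
      rw [← Path.Homotopic.Quotient.mk_trans] at h3
      rwa [Path.Homotopic.Quotient.eq.2
        ⟨Path.Homotopy.subpathTransSubpath γ (t 0) (t n) (t (n + 1))⟩] at h3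
  have h := key n
  rw [tn n le_rfl, t0, Path.subpath_zero_one] at h
  -- `γ.subpath (t 0) (t n)` has endpoints only propositionally equal to `x` and `y`
  have aux : ∀ (a b : X) (ha : a = x) (hb : b = y), P a b (.mk (γ.cast ha hb)) →
      P x y (.mk γ) := by
    rintro a b rfl rfl h
    simpa using h
  exact aux _ _ _ _ h

section holonomy

variable {X G ι : Type*} [TopologicalSpace X] [Group G] [TopologicalSpace G] [DiscreteTopology G]

/-- The principal `G`-bundle (with `G` discrete) glued from the trivial bundles over the `V i` by
the transition functions `(h j)⁻¹ * h i`. The `h i` themselves need not be continuous. -/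
def torsorCore (V : ι → Set X) (h : ι → X → G)
    (hV : ∀ i, IsOpen (V i)) (idx : X → ι) (hidx : ∀ x, x ∈ V (idx x))
    (hh : ∀ i j, ContinuousOn (fun x => (h j x)⁻¹ * h i x) (V i ∩ V j)) :
    FiberBundleCore ι X G where
  baseSet := V
  isOpen_baseSet := hV
  indexAt := idx
  mem_baseSet_at := hidx
  coordChange i j x v := (h j x)⁻¹ * h i x * v
  coordChange_self i x _ v := by simp
  continuousOn_coordChange i j :=
    ((hh i j).comp continuousOn_fst (fun p hp => hp.1)).mul continuousOn_snd
  coordChange_comp i j k x _ v := by group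

/-- If the coboundary `(h j)⁻¹ * h i` is locally constant on the overlaps `V i ∩ V j`, then
`h i y * (h i x)⁻¹`, for paths from `x` to `y` inside `V i`, extends to a functor from the
fundamental groupoid to `G`. It is the monodromy of the covering space `torsorCore`, read in the
global (discontinuous) trivialisation given by the `h i`. -/
theorem exists_holonomy (V : ι → Set X) (h : ι → X → G)
    (hV : ∀ i, IsOpen (V i)) (hcov : ∀ x, ∃ i, x ∈ V i)
    (hh : ∀ i j, ContinuousOn (fun x => (h j x)⁻¹ * h i x) (V i ∩ V j)) :
    ∃ Φ : ∀ x y : X, Path.Homotopic.Quotient x y → G,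
      (∀ x y z (p : Path.Homotopic.Quotient x y) (q : Path.Homotopic.Quotient y z),
        Φ x z (p.trans q) = Φ y z q * Φ x y p) ∧
      ∀ i x y (γ : Path x y), range γ ⊆ V i → Φ x y (.mk γ) = h i y * (h i x)⁻¹ := by
  choose idx hidx using hcov
  let Z := torsorCore V h hV idx hidx hh
  have cov : IsCoveringMap Z.proj :=
    IsFiberBundle.isCoveringMap (F := G) fun x => ⟨Z.localTriv (idx x), hidx x⟩
  -- `pt x v` is the point of the fibre over `x` with global coordinate `v`; in the chart `i` its
  -- coordinate is `(h i x)⁻¹ * v`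
  let pt : ∀ x : X, G → Z.proj ⁻¹' {x} := fun x v => ⟨⟨x, (h (idx x) x)⁻¹ * v⟩, rfl⟩
  let co : ∀ x : X, Z.proj ⁻¹' {x} → G := fun x e => h (idx e.1.1) e.1.1 * (show G from e.1.2)
  have co_pt : ∀ x v, co x (pt x v) = v := fun x v => mul_inv_cancel_left (h (idx x) x) v
  have small : ∀ i x y (γ : Path x y), range γ ⊆ V i → ∀ v,
      cov.monodromy (.mk γ) (pt x v) = pt y (h i y * (h i x)⁻¹ * v) := by
    intro i x y γ hγ v
    let w := (h i x)⁻¹ * v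
    have hc : Continuous fun t => (Z.localTriv i).toOpenPartialHomeomorph.symm (γ t, w) := by
      rw [← continuousOn_univ]
      refine (Z.localTriv i).toOpenPartialHomeomorph.continuousOn_symm.comp
        (by fun_prop) fun t _ => ?_
      exact (Z.mem_localTriv_target i _).2 (hγ ⟨t, rfl⟩)
    have e0 : ∀ z g, z ∈ V i → (Z.localTriv i).toOpenPartialHomeomorph.symm (z, (h i z)⁻¹ * g) =
        (pt z g).1 := by
      intro z g hz
      refine congrArg (Bundle.TotalSpace.mk (F := G) (E := Z.Fiber) z) ?_
      show (h (idx z) z)⁻¹ * h i z * ((h i z)⁻¹ * g) = (h (idx z) z)⁻¹ * g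
      group
    -- the lift of `γ` which is constant in the chart `i`
    let Γ : Path (pt x v).1 (pt y (h i y * (h i x)⁻¹ * v)).1 :=
      { toFun := fun t => (Z.localTriv i).toOpenPartialHomeomorph.symm (γ t, w)
        continuous_toFun := hc
        source' := by
          rw [γ.source]; exact e0 x v (hγ ⟨0, γ.source⟩)
        target' := by
          rw [γ.target, ← e0 y _ (hγ ⟨1, γ.target⟩)]
          congr 2
          simp only [w]; group }
    refine cov.monodromy_eq_of_map_eq (.mk Γ) ?_
    exact congrArg Path.Homotopic.Quotient.mk (Path.ext rfl)
  have equiv : ∀ x y (q : Path.Homotopic.Quotient x y),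
      ∃ g, ∀ v, cov.monodromy q (pt x v) = pt y (g * v) := by
    intro x y q
    refine pathClass_induction hV (fun x => ⟨idx x, hidx x⟩)
      (fun x y q => ∃ g, ∀ v, cov.monodromy q (pt x v) = pt y (g * v))
      (fun i x y γ hγ => ⟨_, small i x y γ hγ⟩) ?_ q
    rintro x y z p q ⟨g, hg⟩ ⟨g', hg'⟩
    refine ⟨g' * g, fun v => ?_⟩
    rw [cov.monodromy_trans_apply, hg, hg', mul_assoc]
  choose Φ hΦ using equiv
  have uniq : ∀ x y (q : Path.Homotopic.Quotient x y) g v,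
      cov.monodromy q (pt x v) = pt y (g * v) → Φ x y q = g := by
    intro x y q g v hq
    have := congrArg (co y) ((hΦ x y q v).symm.trans hq)
    exact mul_right_cancel ((co_pt _ _).symm.trans (this.trans (co_pt _ _)))
  refine ⟨Φ, fun x y z p q => uniq _ _ _ _ 1 ?_, fun i x y γ hγ => uniq _ _ _ _ 1 ?_⟩
  · rw [cov.monodromy_trans_apply, hΦ, hΦ, mul_assoc]
  · exact small i x y γ hγ 1

end holonomy

/-! ### Cutting a space along disjoint walls -/

section vanKampen

variable {X : Type*} [TopologicalSpace X]

/-- The path class `q` has a representative running inside `S`. -/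
def InSet (S : Set X) {x y : X} (q : Path.Homotopic.Quotient x y) : Prop :=
  ∃ γ : Path x y, range γ ⊆ S ∧ .mk γ = q

theorem InSet.mono {S T : Set X} (h : S ⊆ T) {x y : X} {q : Path.Homotopic.Quotient x y}
    (hq : InSet S q) : InSet T q :=
  let ⟨γ, hγ, e⟩ := hq
  ⟨γ, hγ.trans h, e⟩

theorem InSet.trans {S : Set X} {x y z : X} {p : Path.Homotopic.Quotient x y}
    {q : Path.Homotopic.Quotient y z} (hp : InSet S p) (hq : InSet S q) :
    InSet S (p.trans q) := by
  obtain ⟨γ, hγ, rfl⟩ := hp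
  obtain ⟨δ, hδ, rfl⟩ := hq
  refine ⟨γ.trans δ, ?_, Path.Homotopic.Quotient.mk_trans _ _⟩
  rw [Path.trans_range]
  exact union_subset hγ hδ

/-- Two paths inside a simply connected set with the same endpoints are homotopic. -/
theorem InSet.unique {S : Set X} (hS : IsSimplyConnected S) {x y : X}
    {p q : Path.Homotopic.Quotient x y} (hp : InSet S p) (hq : InSet S q) : p = q := by
  obtain ⟨γ, hγ, rfl⟩ := hp
  obtain ⟨δ, hδ, rfl⟩ := hq
  have := hS.simplyConnectedSpace
  have hx : x ∈ S := hγ ⟨0, γ.source⟩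
  have hy : y ∈ S := hγ ⟨1, γ.target⟩
  let lft (ε : Path x y) (hε : range ε ⊆ S) : Path (⟨x, hx⟩ : S) ⟨y, hy⟩ :=
    { toFun := fun t => ⟨ε t, hε ⟨t, rfl⟩⟩
      continuous_toFun := by fun_prop
      source' := Subtype.ext ε.source
      target' := Subtype.ext ε.target }
  have h := (SimplyConnectedSpace.paths_homotopic (lft γ hγ) (lft δ hδ)).map
    ⟨Subtype.val, continuous_subtype_val⟩
  exact Path.Homotopic.Quotient.eq.2 h

theorem exists_inSet {S : Set X} (hS : IsPathConnected S) (x y : X) (hx : x ∈ S) (hy : y ∈ S) :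
    ∃ q : Path.Homotopic.Quotient x y, InSet S q := by
  obtain ⟨γ, hγ⟩ := hS.joinedIn x hx y hy
  exact ⟨.mk γ, γ, by rintro _ ⟨t, rfl⟩; exact hγ t, rfl⟩

/-- The case of `fundamentalGroup_of_walls` where the basepoint lies in `U`, together with the
connectedness that reduces the general case to it. -/
theorem fundamentalGroup_of_walls_aux {K : Type*} (U : Set X) (N M P : K → Set X)
    (hU : IsOpen U) (hN : ∀ k, IsOpen (N k)) (hM : ∀ k, IsOpen (M k)) (hP : ∀ k, IsOpen (P k))
    (hcov : ∀ x, x ∈ U ∨ ∃ k, x ∈ N k)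
    (hNN : ∀ j k, j ≠ k → N j ∩ N k ⊆ U)
    (hNU : ∀ k, N k ∩ U = M k ∪ P k) (hMP : ∀ k, Disjoint (M k) (P k))
    (sU : IsSimplyConnected U) (sN : ∀ k, IsSimplyConnected (N k))
    (pM : ∀ k, IsPathConnected (M k)) (pP : ∀ k, IsPathConnected (P k)) (x0 : X) (hx0 : x0 ∈ U) :
    Nonempty (FundamentalGroup X x0 ≃* FreeGroup K) ∧
      ∀ y : X, Nonempty (Path.Homotopic.Quotient x0 y) := by
  classical
  let V : Option K → Set X := fun i => i.elim U N
  -- crossing the wall `k` from `M k` to `P k` contributes the letter `k`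
  let h : Option K → X → FreeGroup K := fun i x =>
    i.elim 1 fun k => if x ∈ P k then FreeGroup.of k else 1
  let : TopologicalSpace (FreeGroup K) := ⊥
  have : DiscreteTopology (FreeGroup K) := ⟨rfl⟩
  have hV : ∀ i, IsOpen (V i) := by rintro (_ | k); exacts [hU, hN k]
  have hVcov : ∀ x, ∃ i, x ∈ V i := fun x => (hcov x).elim (fun hx => ⟨none, hx⟩)
    fun ⟨k, hk⟩ => ⟨some k, hk⟩
  have MN : ∀ k, M k ⊆ N k := fun k x hx => ((hNU k).ge (Or.inl hx)).1
  have MU : ∀ k, M k ⊆ U := fun k x hx => ((hNU k).ge (Or.inl hx)).2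
  have PN : ∀ k, P k ⊆ N k := fun k x hx => ((hNU k).ge (Or.inr hx)).1
  have PU : ∀ k, P k ⊆ U := fun k x hx => ((hNU k).ge (Or.inr hx)).2
  have hloc : ∀ i x, x ∈ V i → x ∈ U → ∀ᶠ y in 𝓝 x, h i y = h i x := by
    rintro (_ | k) x hx hxU
    · exact Filter.Eventually.of_forall fun _ => rfl
    · rcases (hNU k).le ⟨hx, hxU⟩ with hm | hp
      · filter_upwards [(hM k).mem_nhds hm] with y hy
        simp [h, (hMP k).notMem_of_mem_left hm, (hMP k).notMem_of_mem_left hy]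
      · filter_upwards [(hP k).mem_nhds hp] with y hy
        simp [h, hp, hy]
  have hVV : ∀ i j, i ≠ j → V i ∩ V j ⊆ U := by
    rintro (_ | j) (_ | k) hne
    · exact (hne rfl).elim
    · exact inter_subset_left
    · exact inter_subset_right
    · exact hNN j k (by simpa using hne)
  have hh : ∀ i j, ContinuousOn (fun x => (h j x)⁻¹ * h i x) (V i ∩ V j) := by
    intro i j
    by_cases hij : i = j
    · subst hij
      simpa using continuousOn_const
    · intro x hx
      have hxU := hVV i j hij hx
      refine ContinuousAt.continuousWithinAt ?_
      refine (continuousAt_const (y := (h j x)⁻¹ * h i x)).congr ?_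
      filter_upwards [hloc i x hx.1 hxU, hloc j x hx.2 hxU] with y h1 h2
      rw [h1, h2]
  obtain ⟨Φ, Φtrans, Φsmall⟩ := exists_holonomy V h hV hVcov hh
  choose m hm using fun k => (pM k).nonempty
  choose p hp using fun k => (pP k).nonempty
  choose JU hJU using fun x y => exists_inSet sU.isPathConnected x y
  choose JN hJN using fun k x y => exists_inSet (sN k).isPathConnected x y
  let ψ : FreeGroup K →* FundamentalGroup X x0 := FreeGroup.lift fun k =>
    ((JU x0 (m k) hx0 (MU k (hm k))).trans
      (JN k (m k) (p k) (MN k (hm k)) (PN k (hp k)))).trans (JU (p k) x0 (PU k (hp k)) hx0)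
  have ψ_of : ∀ k, ψ (.of k) = ((JU x0 (m k) hx0 (MU k (hm k))).trans
      (JN k (m k) (p k) (MN k (hm k)) (PN k (hp k)))).trans (JU (p k) x0 (PU k (hp k)) hx0) :=
    fun k => FreeGroup.lift_apply_of
  -- `D i x` goes from the basepoint to `x ∈ V i`: inside `U` if `i = none`, and inside `U` to `m k`
  -- and then inside `N k` if `i = some k`
  have exD : ∀ i x, x ∈ V i → ∃ d : Path.Homotopic.Quotient x0 x,
      match i with
      | none => InSet U d
      | some k => ∃ e, InSet (N k) e ∧ d = (JU x0 (m k) hx0 (MU k (hm k))).trans e := by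
    rintro (_ | k) x hx
    · exact ⟨JU x0 x hx0 hx, hJU _ _ _ _⟩
    · exact ⟨_, JN k (m k) x (MN k (hm k)) hx, hJN _ _ _ _ _, rfl⟩
  choose D hD using exD
  have D_move : ∀ i x y (hx : x ∈ V i) (hy : y ∈ V i) (q : Path.Homotopic.Quotient x y),
      InSet (V i) q → (D i x hx).trans q = D i y hy := by
    rintro (_ | k) x y hx hy q hq
    · exact ((hD none x hx).trans hq).unique sU (hD none y hy)
    · obtain ⟨e, he, hd⟩ := hD (some k) x hx
      obtain ⟨e', he2, hd'⟩ := hD (some k) y hy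
      rw [hd, hd', Path.Homotopic.Quotient.trans_assoc, (he.trans hq).unique (sN k) he2]
  -- `ψ` with values regarded as path classes; multiplication in `FundamentalGroup` is
  -- concatenation in the reverse order
  let A : FreeGroup K → Path.Homotopic.Quotient x0 x0 := fun g => ψ g
  have A_mul : ∀ a b, A (a * b) = (A b).trans (A a) := fun a b => map_mul ψ a b
  have A_one : A 1 = .refl x0 := map_one ψ
  -- the correction by `h i x` makes the paths `c i x` independent of `i`
  let c : ∀ i x, x ∈ V i → Path.Homotopic.Quotient x0 x := fun i x hx =>
    (A (h i x)⁻¹).trans (D i x hx)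
  have c_none : ∀ x hx, c none x hx = D none x hx := by
    intro x hx
    show (A 1⁻¹).trans _ = _
    rw [inv_one, A_one, Path.Homotopic.Quotient.refl_trans]
  have c_U : ∀ i x (hx : x ∈ V i) (hxU : x ∈ V none), c i x hx = c none x hxU := by
    rintro (_ | k) x hx hxU
    · rfl
    · rw [c_none]
      obtain ⟨e, he, hd⟩ := hD (some k) x hx
      rcases (hNU k).le ⟨hx, hxU⟩ with hxm | hxp
      · have h1 : h (some k) x = 1 := by simp [h, (hMP k).notMem_of_mem_left hxm]
        simp only [c, h1, inv_one, A_one, Path.Homotopic.Quotient.refl_trans, hd]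
        obtain ⟨e', he'⟩ := exists_inSet (pM k) (m k) x (hm k) hxm
        rw [he.unique (sN k) (he'.mono (MN k))]
        exact ((hJU _ _ _ _).trans (he'.mono (MU k))).unique sU (hD none x hxU)
      · have h1 : h (some k) x = .of k := by simp [h, hxp]
        obtain ⟨e', he'⟩ := exists_inSet (pP k) (p k) x (hp k) hxp
        have h2 : D (some k) x hx = (A (.of k)).trans (D none x hxU) := by
          show _ = (Path.Homotopic.Quotient.trans (ψ (.of k)) _)
          rw [hd, ψ_of, Path.Homotopic.Quotient.trans_assoc, Path.Homotopic.Quotient.trans_assoc]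
          congr 1
          rw [((hJU (p k) x0 _ _).trans (hD none x hxU)).unique sU (he'.mono (PU k))]
          exact he.unique (sN k) ((hJN _ _ _ _ _).trans (he'.mono (PN k)))
        simp only [c]
        rw [h1, h2, ← Path.Homotopic.Quotient.trans_assoc, ← A_mul, mul_inv_cancel, A_one,
          Path.Homotopic.Quotient.refl_trans]
  have c_eq : ∀ i j x (hi : x ∈ V i) (hj : x ∈ V j), c i x hi = c j x hj := by
    intro i j x hi hj
    by_cases hij : i = j
    · subst hij; rfl
    · have hxU := hVV i j hij ⟨hi, hj⟩
      rw [c_U i x hi hxU, c_U j x hj hxU]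
  choose idx hidx using hVcov
  -- every path class is determined by its holonomy; for loops at `x0` this reads `q = ψ (Φ q)`
  have key : ∀ x y (q : Path.Homotopic.Quotient x y),
      (c (idx x) x (hidx x)).trans q = (A (Φ x y q)).trans (c (idx y) y (hidx y)) := by
    intro x y q
    refine pathClass_induction hV (fun x => ⟨idx x, hidx x⟩) (fun x y q =>
      (c (idx x) x (hidx x)).trans q = (A (Φ x y q)).trans (c (idx y) y (hidx y))) ?_ ?_ q
    · intro i x y γ hγ
      have hx : x ∈ V i := hγ ⟨0, γ.source⟩
      have hy : y ∈ V i := hγ ⟨1, γ.target⟩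
      rw [c_eq _ i x _ hx, c_eq _ i y _ hy, Φsmall i x y γ hγ]
      simp only [c]
      rw [Path.Homotopic.Quotient.trans_assoc, D_move i x y hx hy _ ⟨γ, hγ, rfl⟩,
        ← Path.Homotopic.Quotient.trans_assoc, ← A_mul, ← mul_assoc, inv_mul_cancel, one_mul]
    · intro x y z p q h1 h2
      rw [← Path.Homotopic.Quotient.trans_assoc, h1, Path.Homotopic.Quotient.trans_assoc, h2,
        ← Path.Homotopic.Quotient.trans_assoc, Φtrans, A_mul]
  have c_x0 : c (idx x0) x0 (hidx x0) = .refl x0 := by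
    refine (c_eq _ none x0 _ hx0).trans ((c_none _ _).trans ?_)
    refine (hD none x0 hx0).unique sU ⟨.refl x0, ?_, rfl⟩
    rintro _ ⟨t, rfl⟩
    exact hx0
  let Φ' : FundamentalGroup X x0 →* FreeGroup K := MonoidHom.mk' (fun q => Φ x0 x0 q)
    fun a b => Φtrans x0 x0 x0 b a
  have small' : ∀ i x y (q : Path.Homotopic.Quotient x y), InSet (V i) q →
      Φ x y q = h i y * (h i x)⁻¹ := by
    rintro i x y _ ⟨γ, hγ, rfl⟩
    exact Φsmall i x y γ hγ
  refine ⟨⟨MonoidHom.toMulEquiv Φ' ψ ?_ ?_⟩, fun y => ⟨c _ y (hidx y)⟩⟩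
  · ext q
    have := key x0 x0 q
    rw [c_x0, Path.Homotopic.Quotient.refl_trans, Path.Homotopic.Quotient.trans_refl] at this
    exact this.symm
  · refine FreeGroup.ext_hom _ _ fun k => ?_
    show Φ x0 x0 (ψ (.of k)) = _
    rw [ψ_of, Φtrans, Φtrans, small' none _ _ _ (hJU _ _ _ _), small' none _ _ _ (hJU _ _ _ _),
      small' (some k) _ _ _ (hJN _ _ _ _ _)]
    simp [h, hp, (hMP k).notMem_of_mem_left (hm k)]

/-- Let `X` be covered by a simply connected open set `U` and simply connected open neighbourhoods
`N k` of the walls in the complement of `U`. Suppose that distinct `N k` meet only inside `U`, and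
that each `N k ∩ U` splits into two path connected sides, `M k` and `P k`. Then `π₁(X)` is free on
the set of walls: the generator `k` leaves `U` across the wall `k`, from the side `M k` to the
side `P k`, and comes back through `U`. -/
theorem fundamentalGroup_of_walls {K : Type*} (U : Set X) (N M P : K → Set X)
    (hU : IsOpen U) (hN : ∀ k, IsOpen (N k)) (hM : ∀ k, IsOpen (M k)) (hP : ∀ k, IsOpen (P k))
    (hcov : ∀ x, x ∈ U ∨ ∃ k, x ∈ N k)
    (hNN : ∀ j k, j ≠ k → N j ∩ N k ⊆ U)
    (hNU : ∀ k, N k ∩ U = M k ∪ P k) (hMP : ∀ k, Disjoint (M k) (P k))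
    (sU : IsSimplyConnected U) (sN : ∀ k, IsSimplyConnected (N k))
    (pM : ∀ k, IsPathConnected (M k)) (pP : ∀ k, IsPathConnected (P k)) (y : X) :
    Nonempty (FundamentalGroup X y ≃* FreeGroup K) := by
  obtain ⟨x0, hx0⟩ := sU.isPathConnected.nonempty
  obtain ⟨⟨e⟩, hc⟩ := fundamentalGroup_of_walls_aux U N M P hU hN hM hP hcov hNN hNU hMP sU sN
    pM pP x0 hx0
  obtain ⟨q⟩ := hc y
  obtain ⟨γ, -⟩ := Path.Homotopic.Quotient.mk_surjective q
  exact ⟨(FundamentalGroup.fundamentalGroupMulEquivOfPath γ).symm.trans e⟩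

end vanKampen

/-! ### A subset of the three-dimensional torus cut along four walls -/

section torus

/-- The covering map `t ↦ exp (2πit)` of the circle, with period `1`. -/
def ex (t : ℝ) : Circle := Circle.exp (2 * π * t)

theorem ex_eq_ex {s t : ℝ} : ex s = ex t ↔ ∃ m : ℤ, s = t + m := by
  rw [ex, ex, Circle.exp_eq_exp]
  refine exists_congr fun m => ?_
  have h2 := Real.two_pi_pos
  constructor
  · intro h
    exact mul_left_cancel₀ h2.ne' (by linarith)
  · rintro rfl
    ring

theorem ex_inj {s t : ℝ} (h : ex s = ex t) (h1 : s - t < 1) (h2 : t - s < 1) : s = t := by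
  obtain ⟨m, rfl⟩ := ex_eq_ex.1 h
  have h3 : m < 1 := by exact_mod_cast (by linarith : (m : ℝ) < 1)
  have h4 : -1 < m := by exact_mod_cast (by linarith : (-1 : ℝ) < m)
  obtain rfl : m = 0 := by omega
  simp

theorem ex_zero : ex 0 = 1 := by simp [ex]

theorem ex_ne_one {t : ℝ} (h0 : t ≠ 0) (h1 : -1 < t) (h2 : t < 1) : ex t ≠ 1 := fun h =>
  h0 (ex_inj (h.trans ex_zero.symm) (by linarith) (by linarith))

theorem ex_surj (z : Circle) : ∃ t, 0 ≤ t ∧ t < 1 ∧ ex t = z := by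
  obtain ⟨s, rfl⟩ := Circle.exp_surjective z
  refine ⟨Int.fract (s / (2 * π)), Int.fract_nonneg _, Int.fract_lt_one _, ?_⟩
  have h2 := Real.two_pi_pos
  have : Circle.exp s = ex (s / (2 * π)) := by rw [ex]; congr 1; field_simp
  rw [this, ex_eq_ex]
  exact ⟨-⌊s / (2 * π)⌋, by rw [Int.fract]; push_cast; ring⟩

theorem continuous_ex : Continuous ex := by unfold ex; fun_prop

theorem isOpenMap_ex : IsOpenMap ex :=
  isLocalHomeomorph_circleExp.isOpenMap.comp
    (Homeomorph.mulLeft₀ (2 * π) Real.two_pi_pos.ne').isOpenMap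

/-- The universal covering of the three-dimensional torus. -/
def ex3 (t : (ℝ × ℝ) × ℝ) : (Circle × Circle) × Circle := ((ex t.1.1, ex t.1.2), ex t.2)

theorem continuous_ex3 : Continuous ex3 := by
  have := continuous_ex
  unfold ex3
  fun_prop

theorem isOpenMap_ex3 : IsOpenMap ex3 := (isOpenMap_ex.prodMap isOpenMap_ex).prodMap isOpenMap_ex

theorem isSimplyConnected_ex3_image {C : Set ((ℝ × ℝ) × ℝ)} (hC : IsOpen C) (hcon : Convex ℝ C)
    (hne : C.Nonempty) (hinj : InjOn ex3 C) : IsSimplyConnected (ex3 '' C) := by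
  have : ContractibleSpace C := hcon.contractibleSpace hne
  have emb : IsEmbedding (C.domRestrict ex3) :=
    (IsOpenEmbedding.of_continuous_injective_isOpenMap (continuous_ex3.comp continuous_subtype_val)
      hinj.injective (isOpenMap_ex3.domRestrict hC)).isEmbedding
  rw [← range_domRestrict, ← image_univ]
  refine emb.isSimplyConnected_image.2 ?_
  exact (Homeomorph.Set.univ C).toHomotopyEquiv.simplyConnectedSpace

/-- The complement in the torus of the circle `a = b = 1` and of the three
curves `a = w = 1`, `b = w = 1`, `a = b, w = 1`. -/
def model : Set ((Circle × Circle) × Circle) :=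
  {x | ¬(x.1.1 = 1 ∧ x.1.2 = 1) ∧ ((x.1.1 = 1 ∨ x.1.2 = 1 ∨ x.1.1 = x.1.2) → x.2 ≠ 1)}

/-- The complement in the torus of the three tori `a = 1`, `b = 1`, `w = 1`. -/
def cell : Set ((Circle × Circle) × Circle) := {x | x.1.1 ≠ 1 ∧ x.1.2 ≠ 1 ∧ x.2 ≠ 1}

/-- The open unit cube, which maps bijectively onto `cell`. -/
def cube : Set ((ℝ × ℝ) × ℝ) := (Ioo 0 1 ×ˢ Ioo 0 1) ×ˢ Ioo 0 1

/-- Convex sets which map bijectively onto neighbourhoods of the four walls: `a = 1`, `b = 1`, and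
the two halves `arg a < arg b`, `arg b < arg a` of `w = 1`, with arguments taken in `(0, 2π)`. -/
def nbhd : Fin 4 → Set ((ℝ × ℝ) × ℝ) :=
  ![(Ioo (-1/2) (1/2) ×ˢ Ioo 0 1) ×ˢ Ioo 0 1, (Ioo 0 1 ×ˢ Ioo (-1/2) (1/2)) ×ˢ Ioo 0 1,
    {t | 0 < t.1.1 ∧ t.1.1 < t.1.2 ∧ t.1.2 < 1} ∩ {t | -1/2 < t.2 ∧ t.2 < 1/2},
    {t | 0 < t.1.2 ∧ t.1.2 < t.1.1 ∧ t.1.1 < 1} ∩ {t | -1/2 < t.2 ∧ t.2 < 1/2}]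

/-- The coordinate that vanishes on the wall inside `nbhd k`. -/
def coord : Fin 4 → ((ℝ × ℝ) × ℝ →L[ℝ] ℝ) :=
  ![.comp (.fst ℝ ℝ ℝ) (.fst ℝ (ℝ × ℝ) ℝ), .comp (.snd ℝ ℝ ℝ) (.fst ℝ (ℝ × ℝ) ℝ),
    .snd ℝ (ℝ × ℝ) ℝ, .snd ℝ (ℝ × ℝ) ℝ]

theorem isOpen_nbhd (k : Fin 4) : IsOpen (nbhd k) := by
  fin_cases k
  · exact (isOpen_Ioo.prod isOpen_Ioo).prod isOpen_Ioo
  · exact (isOpen_Ioo.prod isOpen_Ioo).prod isOpen_Ioo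
  all_goals
    have h1 : Continuous fun t : (ℝ × ℝ) × ℝ => t.1.1 := by fun_prop
    have h2 : Continuous fun t : (ℝ × ℝ) × ℝ => t.1.2 := by fun_prop
    have h3 : Continuous fun t : (ℝ × ℝ) × ℝ => t.2 := by fun_prop
    have h0 (c : ℝ) : Continuous fun _ : (ℝ × ℝ) × ℝ => c := continuous_const
    first
    | exact ((isOpen_lt (h0 0) h1).inter ((isOpen_lt h1 h2).inter (isOpen_lt h2 (h0 1)))).inter
        ((isOpen_lt (h0 _) h3).inter (isOpen_lt h3 (h0 _)))
    | exact ((isOpen_lt (h0 0) h2).inter ((isOpen_lt h2 h1).inter (isOpen_lt h1 (h0 1)))).inter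
        ((isOpen_lt (h0 _) h3).inter (isOpen_lt h3 (h0 _)))

/-- The solutions of a strict affine inequality form a convex set. -/
theorem convex_lt {f g : (ℝ × ℝ) × ℝ →L[ℝ] ℝ} {a b : ℝ} : Convex ℝ {t | a + f t < b + g t} := by
  have : {t | a + f t < b + g t} = {t | (f - g) t < b - a} := by
    ext t
    simp only [mem_ofPred_eq, sub_apply]
    constructor <;> intro h <;> linarith
  rw [this]
  exact convex_halfSpace_lt (f - g).toLinearMap.isLinear _

theorem convex_nbhd (k : Fin 4) : Convex ℝ (nbhd k) := by
  fin_cases k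
  · exact ((convex_Ioo _ _).prod (convex_Ioo _ _)).prod (convex_Ioo _ _)
  · exact ((convex_Ioo _ _).prod (convex_Ioo _ _)).prod (convex_Ioo _ _)
  · have := ((convex_lt (f := 0) (g := coord 0) (a := 0) (b := 0)).inter
      ((convex_lt (f := coord 0) (g := coord 1) (a := 0) (b := 0)).inter
      (convex_lt (f := coord 1) (g := 0) (a := 0) (b := 1)))).inter
      ((convex_lt (f := 0) (g := coord 2) (a := -1/2) (b := 0)).inter
      (convex_lt (f := coord 2) (g := 0) (a := 0) (b := 1/2)))
    convert this using 1
    ext t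
    simp [nbhd, coord]
  · have := ((convex_lt (f := 0) (g := coord 1) (a := 0) (b := 0)).inter
      ((convex_lt (f := coord 1) (g := coord 0) (a := 0) (b := 0)).inter
      (convex_lt (f := coord 0) (g := 0) (a := 0) (b := 1)))).inter
      ((convex_lt (f := 0) (g := coord 2) (a := -1/2) (b := 0)).inter
      (convex_lt (f := coord 2) (g := 0) (a := 0) (b := 1/2)))
    convert this using 1
    ext t
    simp [nbhd, coord]

/-- The covering is injective on a set whose points differ by less than `1` in every coordinate. -/
theorem injOn_of_small {C : Set ((ℝ × ℝ) × ℝ)}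
    (h : ∀ s ∈ C, ∀ t ∈ C, s.1.1 - t.1.1 < 1 ∧ s.1.2 - t.1.2 < 1 ∧ s.2 - t.2 < 1) :
    InjOn ex3 C := by
  intro s hs t ht e
  simp only [ex3, Prod.mk.injEq] at e
  obtain ⟨a1, a2, a3⟩ := h s hs t ht
  obtain ⟨b1, b2, b3⟩ := h t ht s hs
  exact Prod.ext (Prod.ext (ex_inj e.1.1 a1 b1) (ex_inj e.1.2 a2 b2)) (ex_inj e.2 a3 b3)

theorem injOn_nbhd (k : Fin 4) : InjOn ex3 (nbhd k) := by
  refine injOn_of_small fun s hs t ht => ?_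
  fin_cases k <;> simp [nbhd] at hs ht <;> refine ⟨?_, ?_, ?_⟩ <;> linarith

theorem injOn_cube : InjOn ex3 cube := by
  refine injOn_of_small fun s hs t ht => ?_
  simp [cube] at hs ht
  refine ⟨?_, ?_, ?_⟩ <;> linarith

theorem ex3_cube : ex3 '' cube = cell := by
  ext ⟨⟨a, b⟩, w⟩
  constructor
  · rintro ⟨⟨⟨s, t⟩, r⟩, h, e⟩
    rw [← e]
    simp [cube] at h
    exact ⟨ex_ne_one (by linarith) (by linarith) (by linarith), ex_ne_one (by linarith)
      (by linarith) (by linarith), ex_ne_one (by linarith) (by linarith) (by linarith)⟩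
  · rintro ⟨ha, hb, hw⟩
    have pos : ∀ z : Circle, z ≠ 1 → ∃ t ∈ Ioo (0 : ℝ) 1, ex t = z := by
      intro z hz
      obtain ⟨t, h0, h1, rfl⟩ := ex_surj z
      exact ⟨t, ⟨h0.lt_of_ne (fun h => hz (h ▸ ex_zero)), h1⟩, rfl⟩
    obtain ⟨s, hs, rfl⟩ := pos a ha
    obtain ⟨t, ht, rfl⟩ := pos b hb
    obtain ⟨r, hr, rfl⟩ := pos w hw
    exact ⟨((s, t), r), ⟨⟨hs, ht⟩, hr⟩, rfl⟩

theorem cell_subset_model : cell ⊆ model := fun _ h => ⟨fun h' => h.1 h'.1, fun _ => h.2.2⟩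

/-- Inside `nbhd k`, the complement of `cell` is the zero set of `coord k`. -/
theorem ex3_nbhd_mem_cell {k : Fin 4} {t : (ℝ × ℝ) × ℝ} (ht : t ∈ nbhd k) :
    ex3 t ∈ cell ↔ coord k t ≠ 0 := by
  constructor
  · rintro ⟨h1, h2, h3⟩ h
    fin_cases k
    · exact h1 ((congrArg ex h).trans ex_zero)
    · exact h2 ((congrArg ex h).trans ex_zero)
    · exact h3 ((congrArg ex h).trans ex_zero)
    · exact h3 ((congrArg ex h).trans ex_zero)
  · intro h
    fin_cases k <;> simp [nbhd, coord] at ht h <;>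
      refine ⟨ex_ne_one ?_ ?_ ?_, ex_ne_one ?_ ?_ ?_, ex_ne_one ?_ ?_ ?_⟩ <;>
      first | exact h | linarith

theorem nbhd_subset_model (k : Fin 4) : ex3 '' nbhd k ⊆ model := by
  rintro _ ⟨t, ht, rfl⟩
  by_cases h : coord k t = 0
  · fin_cases k <;> simp [nbhd, coord] at ht h
    · have hb : ex t.1.2 ≠ 1 := ex_ne_one (by linarith) (by linarith) (by linarith)
      have hw : ex t.2 ≠ 1 := ex_ne_one (by linarith) (by linarith) (by linarith)
      exact ⟨fun h => hb h.2, fun _ => hw⟩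
    · have hb : ex t.1.1 ≠ 1 := ex_ne_one (by linarith) (by linarith) (by linarith)
      have hw : ex t.2 ≠ 1 := ex_ne_one (by linarith) (by linarith) (by linarith)
      exact ⟨fun h => hb h.1, fun _ => hw⟩
    all_goals
      have ha : ex t.1.1 ≠ 1 := ex_ne_one (by linarith) (by linarith) (by linarith)
      have hb : ex t.1.2 ≠ 1 := ex_ne_one (by linarith) (by linarith) (by linarith)
      have hab : ex t.1.1 ≠ ex t.1.2 := fun e => by
        have := ex_inj e (by linarith) (by linarith)
        linarith
      exact ⟨fun h => hb h.2, fun h => by simp_all [ex3]⟩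
  · exact cell_subset_model ((ex3_nbhd_mem_cell ht).2 h)

theorem model_cover {x : (Circle × Circle) × Circle} (hx : x ∈ model) :
    x ∈ cell ∨ ∃ k, x ∈ ex3 '' nbhd k := by
  obtain ⟨⟨a, b⟩, w⟩ := x
  obtain ⟨s, hs0, hs1, rfl⟩ := ex_surj a
  obtain ⟨t, ht0, ht1, rfl⟩ := ex_surj b
  obtain ⟨r, hr0, hr1, rfl⟩ := ex_surj w
  obtain ⟨h1, h2⟩ := hx
  refine or_iff_not_imp_left.2 fun hc => ?_
  rw [← ex3_cube] at hc
  have hcu : ¬ ((s, t), r) ∈ cube := fun h => hc ⟨_, h, rfl⟩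
  simp only at h1 h2
  rcases hs0.eq_or_lt with rfl | hs0
  · have hr : r ≠ 0 := by rintro rfl; exact h2 (.inl ex_zero) ex_zero
    have ht : t ≠ 0 := by rintro rfl; exact h1 ⟨ex_zero, ex_zero⟩
    refine ⟨0, ((0, t), r), ?_, rfl⟩
    have := ht0.lt_of_ne' ht
    have := hr0.lt_of_ne' hr
    simp [nbhd, *]
    norm_num
  rcases ht0.eq_or_lt with rfl | ht0
  · have hr : r ≠ 0 := by rintro rfl; exact h2 (.inr (.inl ex_zero)) ex_zero
    refine ⟨1, ((s, 0), r), ?_, rfl⟩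
    have := hr0.lt_of_ne' hr
    simp [nbhd, *]
    norm_num
  rcases hr0.eq_or_lt with rfl | hr0
  · rcases lt_trichotomy s t with h | rfl | h
    · refine ⟨2, ((s, t), 0), ?_, rfl⟩
      simp [nbhd, *]
      norm_num
    · exact (h2 (.inr (.inr rfl)) ex_zero).elim
    · refine ⟨3, ((s, t), 0), ?_, rfl⟩
      simp [nbhd, *]
      norm_num
  · exact (hcu ⟨⟨⟨hs0, hs1⟩, ht0, ht1⟩, hr0, hr1⟩).elim

theorem nbhd_inter {j k : Fin 4} (hjk : j ≠ k) : ex3 '' nbhd j ∩ ex3 '' nbhd k ⊆ cell := by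
  rintro _ ⟨⟨s, hs, rfl⟩, t, ht, e⟩
  by_contra hc
  have hs0 : coord j s = 0 := by
    by_contra h
    exact hc ((ex3_nbhd_mem_cell hs).2 h)
  have ht0 : coord k t = 0 := by
    by_contra h
    exact hc (e ▸ (ex3_nbhd_mem_cell ht).2 h)
  simp only [ex3, Prod.mk.injEq] at e
  obtain ⟨⟨e1, e2⟩, e3⟩ := e
  -- on the walls the first two coordinates lie in `[0, 1)`, hence are determined modulo `1`
  suffices h : (t.1.1 - s.1.1 < 1 ∧ s.1.1 - t.1.1 < 1) ∧ (t.1.2 - s.1.2 < 1 ∧ s.1.2 - t.1.2 < 1) ∧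
      (t.1.1 = s.1.1 → t.1.2 = s.1.2 → False) from
    h.2.2 (ex_inj e1 h.1.1 h.1.2) (ex_inj e2 h.2.1.1 h.2.1.2)
  fin_cases j <;> fin_cases k <;> first | exact (hjk rfl).elim | skip
  all_goals
    simp [nbhd, coord] at hs ht hs0 ht0
    refine ⟨⟨by linarith, by linarith⟩, ⟨by linarith, by linarith⟩, fun _ _ => by linarith⟩

/-- The four walls `a = 1`, `b = 1`, `w = 1 ∧ arg a < arg b`, `w = 1 ∧ arg b < arg a` cut `model`
into an open cube, so its fundamental group is free of rank four. -/
theorem fundamentalGroup_model {X : Type*} [TopologicalSpace X]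
    {e : X → (Circle × Circle) × Circle} (he : IsEmbedding e) (hr : range e = model) (x : X) :
    Nonempty (FundamentalGroup X x ≃* FreeGroup (Fin 4)) := by
  let neg (k : Fin 4) : Set ((ℝ × ℝ) × ℝ) := nbhd k ∩ {t | coord k t < 0}
  let pos (k : Fin 4) : Set ((ℝ × ℝ) × ℝ) := nbhd k ∩ {t | 0 < coord k t}
  have op : ∀ C, IsOpen C → IsOpen (e ⁻¹' (ex3 '' C)) := fun C hC =>
    (isOpenMap_ex3 C hC).preimage he.continuous
  have sc : ∀ C, IsOpen C → Convex ℝ C → C.Nonempty → InjOn ex3 C → ex3 '' C ⊆ model →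
      IsSimplyConnected (e ⁻¹' (ex3 '' C)) := fun C h1 h2 h3 h4 h5 => by
    rw [← he.isSimplyConnected_image, image_preimage_eq_of_subset (h5.trans hr.ge)]
    exact isSimplyConnected_ex3_image h1 h2 h3 h4
  have o_neg : ∀ k, IsOpen (neg k) := fun k =>
    (isOpen_nbhd k).inter (isOpen_lt (coord k).continuous continuous_const)
  have o_pos : ∀ k, IsOpen (pos k) := fun k =>
    (isOpen_nbhd k).inter (isOpen_lt continuous_const (coord k).continuous)
  have ne_neg : ∀ k, (neg k).Nonempty := by
    intro k
    refine ⟨(![((-1/4, 1/2), 1/2), ((1/2, -1/4), 1/2), ((1/4, 1/2), -1/4), ((1/2, 1/4), -1/4)] :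
      Fin 4 → (ℝ × ℝ) × ℝ) k, ?_⟩
    fin_cases k <;> simp [neg, nbhd, coord] <;> norm_num
  have ne_pos : ∀ k, (pos k).Nonempty := by
    intro k
    refine ⟨(![((1/4, 1/2), 1/2), ((1/2, 1/4), 1/2), ((1/4, 1/2), 1/4), ((1/2, 1/4), 1/4)] :
      Fin 4 → (ℝ × ℝ) × ℝ) k, ?_⟩
    fin_cases k <;> simp [pos, nbhd, coord] <;> norm_num
  have c_neg : ∀ k, Convex ℝ (neg k) := fun k =>
    (convex_nbhd k).inter (convex_halfSpace_lt (coord k).toLinearMap.isLinear _)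
  have c_pos : ∀ k, Convex ℝ (pos k) := fun k =>
    (convex_nbhd k).inter (convex_halfSpace_gt (coord k).toLinearMap.isLinear _)
  have i_neg : ∀ k, InjOn ex3 (neg k) := fun k => (injOn_nbhd k).mono inter_subset_left
  have i_pos : ∀ k, InjOn ex3 (pos k) := fun k => (injOn_nbhd k).mono inter_subset_left
  have m_neg : ∀ k, ex3 '' (neg k) ⊆ model := fun k =>
    (image_mono inter_subset_left).trans (nbhd_subset_model k)
  have m_pos : ∀ k, ex3 '' (pos k) ⊆ model := fun k =>
    (image_mono inter_subset_left).trans (nbhd_subset_model k)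
  have o_cube : IsOpen cube := (isOpen_Ioo.prod isOpen_Ioo).prod isOpen_Ioo
  have ne_cube : cube.Nonempty := ⟨((1/2, 1/2), 1/2), by simp [cube]; norm_num⟩
  refine fundamentalGroup_of_walls (e ⁻¹' (ex3 '' cube)) (fun k => e ⁻¹' (ex3 '' nbhd k))
    (fun k => e ⁻¹' (ex3 '' neg k)) (fun k => e ⁻¹' (ex3 '' pos k)) (op _ o_cube)
    (fun k => op _ (isOpen_nbhd k)) (fun k => op _ (o_neg k)) (fun k => op _ (o_pos k))
    ?_ ?_ ?_ ?_ (sc _ o_cube (((convex_Ioo _ _).prod (convex_Ioo _ _)).prod (convex_Ioo _ _))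
      ne_cube injOn_cube (ex3_cube.trans_subset cell_subset_model))
    (fun k => sc _ (isOpen_nbhd k) (convex_nbhd k) ((ne_neg k).mono inter_subset_left)
      (injOn_nbhd k) (nbhd_subset_model k))
    (fun k => (sc _ (o_neg k) (c_neg k) (ne_neg k) (i_neg k) (m_neg k)).isPathConnected)
    (fun k => (sc _ (o_pos k) (c_pos k) (ne_pos k) (i_pos k) (m_pos k)).isPathConnected) x
  · intro y
    rw [ex3_cube]
    exact model_cover (hr.le ⟨y, rfl⟩)
  · intro j k hjk
    rw [ex3_cube]
    exact preimage_mono (nbhd_inter hjk)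
  · intro k
    rw [ex3_cube, ← preimage_inter, ← preimage_union, ← image_union]
    congr 1
    ext y
    constructor
    · rintro ⟨⟨t, ht, rfl⟩, hc⟩
      exact ⟨t, (lt_or_gt_of_ne ((ex3_nbhd_mem_cell ht).1 hc)).imp (⟨ht, ·⟩) (⟨ht, ·⟩), rfl⟩
    · rintro ⟨t, ⟨ht, hc⟩ | ⟨ht, hc⟩, rfl⟩
      · exact ⟨⟨t, ht, rfl⟩, (ex3_nbhd_mem_cell ht).2 hc.ne⟩
      · exact ⟨⟨t, ht, rfl⟩, (ex3_nbhd_mem_cell ht).2 hc.ne'⟩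
  · intro k
    refine Disjoint.preimage e (disjoint_left.2 ?_)
    rintro _ ⟨s, ⟨hs, hs0⟩, rfl⟩ ⟨t, ⟨ht, ht0⟩, h⟩
    obtain rfl := injOn_nbhd k ht hs h
    exact lt_asymm (a := coord k t) hs0 ht0

end torus

/-! ### Straightening the configuration space -/

section straightening

/-- The unit complex number in the direction of `z` (and `1` if `z = 0`). -/
def dir (z : ℂ) : Circle :=
  if h : z = 0 then 1 else ⟨z / ‖z‖, by simp [Submonoid.unitSphere, h]⟩

theorem dir_coe {z : ℂ} (hz : z ≠ 0) : (dir z : ℂ) = z / ‖z‖ := by simp [dir, hz]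

theorem dir_eq {r : ℝ} (hr : 0 < r) (c : Circle) : dir (r * c) = c := by
  have h : (r * c : ℂ) ≠ 0 := by simp [hr.ne']
  refine Circle.ext ?_
  rw [dir_coe h]
  have : (r : ℂ) ≠ 0 := by exact_mod_cast hr.ne'
  have hc : ‖(c : ℂ)‖ = 1 := Circle.norm_coe c
  rw [norm_mul, hc, Complex.norm_of_nonneg hr.le, mul_one]
  field_simp

theorem continuousAt_dir {z : ℂ} (hz : z ≠ 0) : ContinuousAt dir z := by
  have ind : @IsInducing Circle ℂ _ _ (fun c => (c : ℂ)) := ⟨rfl⟩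
  rw [ind.continuousAt_iff]
  have : ContinuousAt (fun z : ℂ => z / ‖z‖) z :=
    continuousAt_id.div (by fun_prop) (by simpa using hz)
  refine this.congr ?_
  filter_upwards [isOpen_ne.mem_nhds hz] with w hw
  exact (dir_coe hw).symm

/-- A function of two points of the circle that is nonzero away from `(1, 1)`, is positive when one
of the points is `1`, and is a positive multiple of `a` on the diagonal `a = b`. -/
def twist (a b : Circle) : ℂ := Complex.normSq (a - b) - 8 * (a - 1) * (b - 1)

/-- If `twist a b = 0`, then `(a - 1) * (b - 1)` is real, which for unit complex numbers forces
`a = 1`, `b = 1` or `b = conj a`; in the last case `|a - conj a|² ≤ 4 |a - 1|² < 8 |a - 1|²`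
unless `a = 1`. -/
theorem twist_ne_zero {a b : Circle} (h : ¬(a = 1 ∧ b = 1)) : twist a b ≠ 0 := by
  intro h0
  have ha : (a : ℂ).re * (a : ℂ).re + (a : ℂ).im * (a : ℂ).im = 1 := by
    rw [← Complex.normSq_apply, Circle.normSq_coe]
  have hb : (b : ℂ).re * (b : ℂ).re + (b : ℂ).im * (b : ℂ).im = 1 := by
    rw [← Complex.normSq_apply, Circle.normSq_coe]
  have h1 : a = 1 ↔ (a : ℂ).re = 1 ∧ (a : ℂ).im = 0 := by
    rw [← Circle.coe_inj, Complex.ext_iff]; simp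
  have h2 : b = 1 ↔ (b : ℂ).re = 1 ∧ (b : ℂ).im = 0 := by
    rw [← Circle.coe_inj, Complex.ext_iff]; simp
  rw [twist, Complex.ext_iff] at h0
  simp [Complex.normSq_apply] at h0
  rw [h1, h2] at h
  obtain ⟨hre, him⟩ := h0
  generalize (a : ℂ).re = x at *
  generalize (a : ℂ).im = y at *
  generalize (b : ℂ).re = p at *
  generalize (b : ℂ).im = q at *
  have i : (x - 1) * q + y * (p - 1) = 0 := by linarith
  -- square `i` and eliminate `y` and `q`
  have k : (1 - x) * ((1 - p) * (p - x)) = 0 := by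
    have : ((x - 1) * q) ^ 2 = (y * (p - 1)) ^ 2 := by
      rw [eq_neg_of_add_eq_zero_left i]; ring
    have hy : y ^ 2 = 1 - x ^ 2 := by linarith
    have hq : q ^ 2 = 1 - p ^ 2 := by linarith
    rw [mul_pow, mul_pow, hy, hq] at this
    linarith
  rcases mul_eq_zero.1 k with hx | k
  · obtain rfl : x = 1 := by linarith
    obtain rfl : y = 0 := by nlinarith
    obtain rfl : p = 1 := by nlinarith
    exact h ⟨⟨rfl, rfl⟩, rfl, by nlinarith⟩
  rcases mul_eq_zero.1 k with hx | hx
  · obtain rfl : p = 1 := by linarith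
    obtain rfl : q = 0 := by nlinarith
    obtain rfl : x = 1 := by nlinarith
    exact h ⟨⟨rfl, by nlinarith⟩, rfl, rfl⟩
  · obtain rfl : p = x := by linarith
    have h3 : (p - 1) * (q + y) = 0 := by linarith
    rcases mul_eq_zero.1 h3 with h3 | h3
    · obtain rfl : p = 1 := by linarith
      exact h ⟨⟨rfl, by nlinarith⟩, rfl, by nlinarith⟩
    · obtain rfl : q = -y := by linarith
      obtain rfl : p = 1 := by nlinarith
      exact h ⟨⟨rfl, by nlinarith⟩, rfl, by nlinarith⟩

/-- The direction of `twist`: it equals `1` when one of the points is `1`, and `a` when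
`a = b`. -/
def centre (a b : Circle) : Circle := dir (twist a b)

theorem normSq_pos {a b : Circle} (h : a ≠ b) : 0 < Complex.normSq (a - b : ℂ) :=
  Complex.normSq_pos.2 (sub_ne_zero.2 fun e => h (Circle.ext e))

theorem centre_one_left {b : Circle} (hb : b ≠ 1) : centre 1 b = 1 := by
  have : twist 1 b = (Complex.normSq ((1 : Circle) - b : ℂ) : ℝ) * (1 : Circle) := by simp [twist]
  rw [centre, this, dir_eq (normSq_pos hb.symm)]

theorem centre_one_right {a : Circle} (ha : a ≠ 1) : centre a 1 = 1 := by
  have : twist a 1 = (Complex.normSq (a - (1 : Circle) : ℂ) : ℝ) * (1 : Circle) := by simp [twist]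
  rw [centre, this, dir_eq (normSq_pos ha)]

theorem centre_self {a : Circle} (ha : a ≠ 1) : centre a a = a := by
  have : twist a a = ((8 * Complex.normSq (a - (1 : Circle) : ℂ) : ℝ) : ℂ) * a := by
    have h : (starRingEnd ℂ a) * a = 1 := by
      rw [← Complex.normSq_eq_conj_mul_self, Circle.normSq_coe, Complex.ofReal_one]
    rw [Complex.ofReal_mul, twist, Complex.normSq_eq_conj_mul_self (z := a - (1 : Circle)),
      map_sub (starRingEnd ℂ)]
    simp only [sub_self, map_zero, Complex.ofReal_zero, Circle.coe_one, map_one,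
      Complex.ofReal_ofNat]
    linear_combination -8 * (a - 1 : ℂ) * h
  rw [centre, this, dir_eq (by linarith [normSq_pos ha])]

theorem continuousAt_centre {p : Circle × Circle} (h : ¬(p.1 = 1 ∧ p.2 = 1)) :
    ContinuousAt (fun p : Circle × Circle => centre p.1 p.2) p := by
  have : Continuous fun p : Circle × Circle => twist p.1 p.2 := by
    unfold twist
    have := Complex.continuous_normSq
    fun_prop
  exact ContinuousAt.comp (f := fun p : Circle × Circle => twist p.1 p.2)
    (continuousAt_dir (twist_ne_zero h)) this.continuousAt

theorem mem_QSet_three {z : Fin 4 → Circle} : z ∈ QSet 3 ↔ z 3 = 1 ∧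
    ¬(z 0 = z 1 ∧ z 0 = z 2) ∧ ¬(z 0 = 1 ∧ z 1 = 1) ∧ ¬(z 0 = 1 ∧ z 2 = 1) ∧
      ¬(z 1 = 1 ∧ z 2 = 1) := by
  constructor
  · rintro ⟨h, H⟩
    replace h : z 3 = 1 := h
    refine ⟨h, H 0 1 2 (by decide) (by decide) (by decide), ?_, ?_, ?_⟩ <;> rw [← h]
    · exact fun e => H 3 0 1 (by decide) (by decide) (by decide) ⟨e.1.symm, e.2.symm⟩
    · exact fun e => H 3 0 2 (by decide) (by decide) (by decide) ⟨e.1.symm, e.2.symm⟩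
    · exact fun e => H 3 1 2 (by decide) (by decide) (by decide) ⟨e.1.symm, e.2.symm⟩
  · rintro ⟨h, h1, h2, h3, h4⟩
    refine ⟨h, ?_⟩
    rintro i j k hij hik hjk ⟨e1, e2⟩
    fin_cases i <;> fin_cases j <;> fin_cases k <;> simp_all

/-- The two points `z 0`, `z 2` together with the position of `z 1` relative to their `centre`
identify `QSet 3` with `model`. -/
def straighten : QSet 3 ≃ₜ model where
  toFun z := ⟨((z.1 0, z.1 2), z.1 1 / centre (z.1 0) (z.1 2)), by
    obtain ⟨h, h1, h2, h3, h4⟩ := mem_QSet_three.1 z.2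
    refine ⟨h3, fun h' hw => ?_⟩
    simp only [div_eq_one] at h' hw
    rcases h' with h' | h' | h'
    · rw [h', centre_one_left fun h => h3 ⟨h', h⟩] at hw
      exact h2 ⟨h', hw⟩
    · rw [h', centre_one_right fun h => h3 ⟨h, h'⟩] at hw
      exact h4 ⟨hw, h'⟩
    · rw [← h', centre_self fun h => h3 ⟨h, h' ▸ h⟩] at hw
      exact h1 ⟨hw.symm, h'⟩⟩
  invFun x := ⟨![x.1.1.1, x.1.2 * centre x.1.1.1 x.1.1.2, x.1.1.2, 1], by
    obtain ⟨⟨⟨a, b⟩, w⟩, h1, h2⟩ := x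
    simp only at h1 h2
    rw [mem_QSet_three]
    simp only [Matrix.cons_val]
    refine ⟨trivial, ?_, ?_, h1, ?_⟩
    · rintro ⟨e1, rfl⟩
      rw [centre_self fun h => h1 ⟨h, h⟩, right_eq_mul] at e1
      exact h2 (.inr (.inr rfl)) e1
    · rintro ⟨rfl, e⟩
      rw [centre_one_left fun h => h1 ⟨rfl, h⟩, mul_one] at e
      exact h2 (.inl rfl) e
    · rintro ⟨e, rfl⟩
      rw [centre_one_right fun h => h1 ⟨h, rfl⟩, mul_one] at e
      exact h2 (.inr (.inl rfl)) e⟩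
  left_inv z := by
    obtain ⟨h, -⟩ := mem_QSet_three.1 z.2
    ext i
    fin_cases i <;> simp [h]
  right_inv x := by
    ext <;> simp
  continuous_toFun := by
    have hz : ∀ i, Continuous fun z : QSet 3 => z.1 i := fun i =>
      (continuous_apply i).comp continuous_subtype_val
    have h : Continuous fun z : QSet 3 => centre (z.1 0) (z.1 2) :=
      continuous_iff_continuousAt.2 fun z => ContinuousAt.comp
        (g := fun p : Circle × Circle => centre p.1 p.2) (f := fun z : QSet 3 => (z.1 0, z.1 2))
        (continuousAt_centre (mem_QSet_three.1 z.2).2.2.2.1) ((hz 0).prodMk (hz 2)).continuousAt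
    exact (((hz 0).prodMk (hz 2)).prodMk ((hz 1).div' h)).subtype_mk _
  continuous_invFun := by
    have h : Continuous fun x : model => centre x.1.1.1 x.1.1.2 :=
      continuous_iff_continuousAt.2 fun x => ContinuousAt.comp
        (g := fun p : Circle × Circle => centre p.1 p.2) (f := fun x : model => x.1.1)
        (continuousAt_centre x.2.1) (by fun_prop)
    refine Continuous.subtype_mk (continuous_pi fun i => ?_) _
    fin_cases i
    · show Continuous fun x : model => x.1.1.1
      fun_prop
    · show Continuous fun x : model => x.1.2 * centre x.1.1.1 x.1.1.2
      fun_prop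
    · show Continuous fun x : model => x.1.1.2
      fun_prop
    · exact continuous_const

end straightening

end proof

/-- The pure round twin group `Π₄ = π₁(Q₄, q₀)` is isomorphic to the
free group on 4 generators. (Here `Q₄ = QSet 3`.) -/
theorem pure_round_twin_four_isomorphic_free_group_four :
    Nonempty (FundamentalGroup (QSet 3) (Qbase 3) ≃* FreeGroup (Fin 4)) :=
  fundamentalGroup_model (Topology.IsEmbedding.subtypeVal.comp straighten.isEmbedding)
    (by rw [straighten.surjective.range_comp, Subtype.range_coe]) _
end
end
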